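/- arXiv:1704.02048 — 4 statements merged into one kernel-verified Lean document; each statement's English description precedes it below -/
import Mathlib

section
/- Let n ≥ 2, let T ⊆ ℝⁿ be a nondegenerate simplex with faces G₀, G₁, …, Gₙ, let h > 0, and let u be a normalized Dirichlet eigenfunction on T. Then for every 0 ≤ j ≤ n, ∫_{Gⱼ} |h ∂_{ωⱼ} u|² dS = 2 · Vol_{n-1}(Gⱼ) / (n · Vol_n(T)), where ωⱼ is the outward unit normal to Gⱼ and h ∂_{ωⱼ} u = h ⟨∇u, ωⱼ⟩. -/
open MeasureTheory RealInnerProductSpace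

/-- The (unscaled) Laplacian `Δu = Σⱼ ∂²u/∂xⱼ²`. -/
noncomputable def lap {n : ℕ} (u : EuclideanSpace ℝ (Fin n) → ℝ)
    (x : EuclideanSpace ℝ (Fin n)) : ℝ :=
  ∑ i, fderiv ℝ (fun y => fderiv ℝ u y (EuclideanSpace.single i 1)) x
    (EuclideanSpace.single i 1)


/-- Affine injective parametrisations transport Lebesgue measure to a multiple of any
translation invariant measure which is finite on images of compact sets. -/
lemma exists_const_param {E : Type*} [NormedAddCommGroup E] [NormedSpace ℝ E]
    [FiniteDimensional ℝ E] [MeasurableSpace E] [BorelSpace E] {m : ℕ}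
    (μ : Measure E) [μ.IsAddLeftInvariant] (a : E) (L : (Fin m → ℝ) →ₗ[ℝ] E)
    (hL : Function.Injective L)
    (hfin : ∀ K, IsCompact K → μ ((fun s => a + L s) '' K) < ⊤) :
    ∃ c : ℝ, ∀ (S : Set (Fin m → ℝ)) (f : E → ℝ),
      ∫ x in (fun s => a + L s) '' S, f x ∂μ = c * ∫ s in S, f (a + L s) := by
  set ψ : (Fin m → ℝ) → E := fun s => a + L s with hψ
  have hcl : Topology.IsClosedEmbedding ψ :=
    (Homeomorph.addLeft a).isClosedEmbedding.comp
      (LinearMap.isClosedEmbedding_of_injective (LinearMap.ker_eq_bot.2 hL))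
  have hme : MeasurableEmbedding ψ := hcl.measurableEmbedding
  let ν : Measure (Fin m → ℝ) := μ.comap ψ
  have hν : ∀ A, ν A = μ (ψ '' A) := fun A => hme.comap_apply μ A
  have : IsFiniteMeasureOnCompacts ν := ⟨fun K hK => by rw [hν]; exact hfin K hK⟩
  have : ν.IsAddLeftInvariant := by
    refine ⟨fun g => ?_⟩
    ext A hA
    rw [Measure.map_apply (measurable_const_add g) hA, hν, hν]
    have : ψ '' ((fun x => g + x) ⁻¹' A) = (fun x => L g + x) ⁻¹' (ψ '' A) := by
      ext x
      constructor
      · rintro ⟨s, hs, rfl⟩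
        exact ⟨g + s, hs, by simp [hψ]; abel⟩
      · rintro ⟨s, hs, h⟩
        refine ⟨s - g, by simpa using hs, ?_⟩
        simp only [hψ, map_sub] at h ⊢
        have : x = a + L s - L g := by rw [h]; abel
        rw [this]; abel
    rw [this, measure_preimage_add]
  have hc := Measure.isAddLeftInvariant_eq_smul ν (volume : Measure (Fin m → ℝ))
  refine ⟨(ν.addHaarScalarFactor volume : ℝ), fun S f => ?_⟩
  have h1 : μ.restrict (ψ '' S) = (ν.restrict S).map ψ := by
    have h2 := hme.restrict_map ν (ψ '' S)
    rw [Set.preimage_image_eq _ hme.injective, hme.map_comap] at h2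
    rw [← h2, Measure.restrict_restrict_of_subset (Set.image_subset_range _ _)]
  rw [h1, hme.integral_map]
  conv_lhs => rw [hc]
  rw [Measure.restrict_smul, integral_smul_nnreal_measure]
  rfl

/-- The solid standard simplex. -/
def stdS (m : ℕ) : Set (Fin m → ℝ) := {s | (∀ k, 0 ≤ s k) ∧ ∑ k, s k ≤ 1}

lemma isCompact_stdS (m : ℕ) : IsCompact (stdS m) := by
  have hcl : IsClosed (stdS m) := by
    have : stdS m = (⋂ k, {s | 0 ≤ s k}) ∩ {s | ∑ k, s k ≤ 1} := by
      ext s; simp [stdS]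
    rw [this]
    refine (isClosed_iInter fun k => ?_).inter ?_
    · exact isClosed_le continuous_const (continuous_apply k)
    · exact isClosed_le (by fun_prop) continuous_const
  refine (isCompact_Icc (a := (0 : Fin m → ℝ)) (b := 1)).of_isClosed_subset hcl ?_
  intro s hs
  refine ⟨fun k => hs.1 k, fun k => ?_⟩
  exact (Finset.single_le_sum (fun i _ => hs.1 i) (Finset.mem_univ k)).trans hs.2

lemma volume_stdS_pos (m : ℕ) : 0 < (volume (stdS m)).toReal := by
  refine ENNReal.toReal_pos ?_ (isCompact_stdS m).measure_ne_top
  have hsub : Set.Icc (0 : Fin m → ℝ) (fun _ => 1 / (m + 1)) ⊆ stdS m := by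
    intro s hs
    refine ⟨fun k => hs.1 k, ?_⟩
    calc ∑ k, s k ≤ ∑ _k : Fin m, (1 / (m + 1) : ℝ) := Finset.sum_le_sum fun k _ => hs.2 k
      _ = m / (m + 1) := by simp; ring
      _ ≤ 1 := by rw [div_le_one (by positivity)]; linarith
  refine (lt_of_lt_of_le ?_ (measure_mono hsub)).ne'
  rw [Real.volume_Icc_pi]
  simp only [Pi.zero_apply, sub_zero]
  rw [Finset.prod_const]
  apply ENNReal.pow_pos
  rw [ENNReal.ofReal_pos]; positivity

lemma insertNth_mem_stdS {m : ℕ} (i : Fin (m + 1)) (t : ℝ) (s : Fin m → ℝ) :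
    i.insertNth (α := fun _ => ℝ) t s ∈ stdS (m + 1) ↔
      (0 ≤ t ∧ t ≤ 1 - ∑ k, s k) ∧ ∀ k, 0 ≤ s k := by
  simp only [stdS, Set.mem_ofPred_eq, Fin.forall_iff_succAbove i, Fin.sum_univ_succAbove _ i,
    Fin.insertNth_apply_same, Fin.insertNth_apply_succAbove]
  constructor
  · rintro ⟨⟨h1, h2⟩, h3⟩; exact ⟨⟨h1, by linarith⟩, h2⟩
  · rintro ⟨⟨h1, h2⟩, h3⟩; exact ⟨⟨h1, h3⟩, by linarith⟩

/-- Fubini and the fundamental theorem of calculus on the standard simplex. -/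
lemma integral_stdS_deriv {m : ℕ} (i : Fin (m + 1)) (f f' : (Fin (m + 1) → ℝ) → ℝ)
    (hf : ∀ s ∈ stdS (m + 1), HasDerivAt (fun t => f (Function.update s i t)) (f' s) (s i))
    (hf' : ContinuousOn f' (stdS (m + 1)))
    (h0 : ∀ s ∈ stdS (m + 1), s i = 0 → f s = 0) :
    ∫ s in stdS (m + 1), f' s =
      ∫ s in stdS m, f (i.insertNth (α := fun _ => ℝ) (1 - ∑ k, s k) s) := by
  have hcS := isCompact_stdS (m + 1)
  have hint : IntegrableOn f' (stdS (m + 1)) := hf'.integrableOn_compact hcS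
  have hmp := (volume_preserving_piFinSuccAbove (fun _ : Fin (m + 1) => ℝ) i).symm
  rw [← integral_indicator hcS.measurableSet, ← integral_indicator (isCompact_stdS m).measurableSet]
  have hint' : Integrable ((stdS (m + 1)).indicator f') :=
    (integrable_indicator_iff hcS.measurableSet).2 hint
  rw [← hmp.integral_comp' (g := (stdS (m + 1)).indicator f')]
  have hint2 := hmp.integrable_comp_of_integrable hint'
  rw [Measure.volume_eq_prod] at hint2 ⊢
  refine (integral_prod_symm _ hint2).trans ?_
  congr 1
  ext s
  have key : ∀ t, (stdS (m + 1)).indicator f'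
      ((MeasurableEquiv.piFinSuccAbove (fun _ : Fin (m + 1) => ℝ) i).symm (t, s)) =
      (stdS (m + 1)).indicator f' (i.insertNth (α := fun _ => ℝ) t s) := fun t => rfl
  simp only [Function.comp_apply, key]
  by_cases hs : s ∈ stdS m
  · rw [Set.indicator_of_mem hs]
    have hle : 0 ≤ 1 - ∑ k, s k := by linarith [hs.2]
    have hmem : ∀ t, t ∈ Set.Icc 0 (1 - ∑ k, s k) →
        i.insertNth (α := fun _ => ℝ) t s ∈ stdS (m + 1) := fun t ht =>
      (insertNth_mem_stdS i t s).2 ⟨ht, hs.1⟩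
    have e1 : (fun t => (stdS (m + 1)).indicator f' (i.insertNth (α := fun _ => ℝ) t s)) =
        (Set.Icc 0 (1 - ∑ k, s k)).indicator
          (fun t => f' (i.insertNth (α := fun _ => ℝ) t s)) := by
      ext t
      by_cases ht : t ∈ Set.Icc 0 (1 - ∑ k, s k)
      · rw [Set.indicator_of_mem ht, Set.indicator_of_mem (hmem t ht)]
      · rw [Set.indicator_of_notMem ht, Set.indicator_of_notMem]
        intro h
        exact ht ((insertNth_mem_stdS i t s).1 h).1
    have hcont : Continuous (fun t : ℝ => i.insertNth (α := fun _ => ℝ) t s) := by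
      refine continuous_pi ?_
      rw [Fin.forall_iff_succAbove i]
      refine ⟨by simpa using continuous_id', fun k => by simpa using continuous_const⟩
    rw [e1, integral_indicator measurableSet_Icc, integral_Icc_eq_integral_Ioc,
      ← intervalIntegral.integral_of_le hle]
    rw [intervalIntegral.integral_eq_sub_of_hasDerivAt
      (f := fun t => f (i.insertNth (α := fun _ => ℝ) t s))]
    · rw [h0 _ (hmem 0 ⟨le_rfl, hle⟩) (by simp), sub_zero]
    · intro t ht
      rw [Set.uIcc_of_le hle] at ht
      have := hf _ (hmem t ht)
      simpa [Fin.update_insertNth] using this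
    · apply ContinuousOn.intervalIntegrable
      rw [Set.uIcc_of_le hle]
      exact hf'.comp hcont.continuousOn hmem
  · rw [Set.indicator_of_notMem hs]
    have : ∀ t, (stdS (m + 1)).indicator f' (i.insertNth (α := fun _ => ℝ) t s) = 0 := by
      intro t
      apply Set.indicator_of_notMem
      intro h
      have h' := (insertNth_mem_stdS i t s).1 h
      exact hs ⟨h'.2, by linarith [h'.1.1, h'.1.2]⟩
    simp [this]

/-- The linear part of the parametrisation of the top face that omits coordinate `i`. -/
def faceLin {m : ℕ} (i : Fin (m + 1)) : (Fin m → ℝ) →ₗ[ℝ] (Fin (m + 1) → ℝ) where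
  toFun s := i.insertNth (α := fun _ => ℝ) (-∑ k, s k) s
  map_add' s t := by
    ext k
    revert k
    rw [Fin.forall_iff_succAbove i]
    constructor
    · simp [Finset.sum_add_distrib]; ring
    · intro k; simp
  map_smul' c t := by
    ext k
    revert k
    rw [Fin.forall_iff_succAbove i]
    constructor
    · simp [Finset.mul_sum]
    · intro k; simp

lemma faceLin_injective {m : ℕ} (i : Fin (m + 1)) : Function.Injective (faceLin i) := by
  intro s t h
  ext k
  have := congrFun h (i.succAbove k)
  simpa [faceLin] using this

lemma single_add_faceLin {m : ℕ} (i : Fin (m + 1)) (s : Fin m → ℝ) :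
    Pi.single i 1 + faceLin i s = i.insertNth (α := fun _ => ℝ) (1 - ∑ k, s k) s := by
  ext k
  revert k
  rw [Fin.forall_iff_succAbove i]
  constructor
  · simp [faceLin]; ring
  · intro k; simp [faceLin]

/-- The top face of the standard simplex. -/
def stdFace (m : ℕ) : Set (Fin m → ℝ) := {s | s ∈ stdS m ∧ ∑ k, s k = 1}

lemma image_insertNth {m : ℕ} (i : Fin (m + 1)) :
    (fun s : Fin m → ℝ => i.insertNth (α := fun _ => ℝ) (1 - ∑ k, s k) s) '' stdS m =
      stdFace (m + 1) := by
  ext s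
  constructor
  · rintro ⟨t, ht, rfl⟩
    refine ⟨(insertNth_mem_stdS i _ t).2 ⟨⟨by linarith [ht.2], le_rfl⟩, ht.1⟩, ?_⟩
    rw [Fin.sum_univ_succAbove _ i]
    simp
  · rintro ⟨⟨h1, h2⟩, h3⟩
    rw [Fin.sum_univ_succAbove _ i] at h3
    refine ⟨fun k => s (i.succAbove k), ⟨fun k => h1 _, by linarith [h1 i]⟩, ?_⟩
    ext k
    revert k
    rw [Fin.forall_iff_succAbove i]
    constructor
    · simp; linarith
    · intro k; simp

/-- Divergence theorem on a simplex for vector fields tangent to the lateral faces. -/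
lemma div_simplex {E : Type*} [NormedAddCommGroup E] [NormedSpace ℝ E]
    [FiniteDimensional ℝ E] [MeasurableSpace E] [BorelSpace E] {m : ℕ}
    (a : E) (B : Module.Basis (Fin (m + 1)) ℝ E) :
    ∃ c : ℝ, ∀ (F : E → E) (F' : E → E →L[ℝ] E),
      (∀ s ∈ stdS (m + 1), HasFDerivAt F (F' (a + B.equivFun.symm s)) (a + B.equivFun.symm s)) →
      ContinuousOn F' ((fun s => a + B.equivFun.symm s) '' stdS (m + 1)) →
      (∀ s ∈ stdS (m + 1), ∀ k, s k = 0 → B.coord k (F (a + B.equivFun.symm s)) = 0) →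
      ∫ x in (fun s => a + B.equivFun.symm s) '' stdFace (m + 1), ∑ k, B.coord k (F x) ∂μH[(m : ℝ)]
        = c * ∫ s in stdS (m + 1), ∑ k, B.coord k (F' (a + B.equivFun.symm s) (B k)) := by
  set L := B.equivFun.symm with hLdef
  set Φ : (Fin (m + 1) → ℝ) → E := fun s => a + L s with hΦ
  have hLc : Continuous L := LinearMap.continuous_of_finiteDimensional L.toLinearMap
  have hΦc : Continuous Φ := continuous_const.add hLc
  have hLsingle : ∀ i, L (Pi.single i 1) = B i := fun i => by
    rw [hLdef, LinearEquiv.symm_apply_eq]; ext k; simp [Module.Basis.equivFun_self, Pi.single_apply, eq_comm]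
  have himg : ∀ i : Fin (m + 1), (fun s : Fin m → ℝ => (a + B i) + (L.toLinearMap ∘ₗ faceLin i) s)
      = fun s => Φ (i.insertNth (α := fun _ => ℝ) (1 - ∑ k, s k) s) := by
    intro i
    ext s
    rw [← single_add_faceLin, hΦ]
    simp only [map_add, hLsingle, LinearMap.comp_apply, LinearEquiv.coe_coe]
    abel
  have himg2 : ∀ i : Fin (m + 1),
      (fun s : Fin m → ℝ => (a + B i) + (L.toLinearMap ∘ₗ faceLin i) s) '' stdS m
      = Φ '' stdFace (m + 1) := by
    intro i
    rw [himg, ← image_insertNth i, Set.image_image]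
  have hfin : ∀ i : Fin (m + 1), ∀ K, IsCompact K → (μH[(m : ℝ)] : Measure E)
      ((fun s : Fin m → ℝ => (a + B i) + (L.toLinearMap ∘ₗ faceLin i) s) '' K) < ⊤ := by
    intro i K hK
    let M : (Fin m → ℝ) →L[ℝ] E := LinearMap.toContinuousLinearMap (L.toLinearMap ∘ₗ faceLin i)
    have hlip : LipschitzWith ‖M‖₊
        (fun s : Fin m → ℝ => (a + B i) + (L.toLinearMap ∘ₗ faceLin i) s) := by
      refine LipschitzWith.of_dist_le_mul fun s t => ?_
      rw [dist_add_left]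
      exact M.lipschitz.dist_le_mul s t
    refine (hlip.hausdorffMeasure_image_le (Nat.cast_nonneg m) K).trans_lt ?_
    have h1 : (μH[(m : ℝ)] : Measure (Fin m → ℝ)) = volume := by
      have := hausdorffMeasure_pi_real (ι := Fin m)
      rwa [Fintype.card_fin] at this
    rw [h1]
    refine ENNReal.mul_lt_top ?_ hK.measure_lt_top
    exact ENNReal.rpow_lt_top_of_nonneg (Nat.cast_nonneg m) ENNReal.coe_ne_top
  have hex := fun i : Fin (m + 1) => exists_const_param (μH[(m : ℝ)] : Measure E) (a + B i)
    (L.toLinearMap ∘ₗ faceLin i) (L.injective.comp (faceLin_injective i)) (hfin i)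
  choose c hc using hex
  have hcc : ∀ i, c i = c 0 := by
    have h1 : ∀ i, ∫ x in Φ '' stdFace (m + 1), (1 : ℝ) ∂(μH[(m : ℝ)] : Measure E) =
        c i * (volume (stdS m)).toReal := by
      intro i
      have := hc i (stdS m) (fun _ => 1)
      rw [himg2] at this
      rw [this]
      simp [Measure.real]
    intro i
    have h2 := (h1 i).symm.trans (h1 0)
    exact mul_right_cancel₀ (volume_stdS_pos m).ne' h2
  have hfaceC : IsCompact (Φ '' stdFace (m + 1)) := by
    rw [← himg2 0]
    refine (isCompact_stdS m).image ?_
    rw [himg]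
    exact hΦc.comp (Continuous.finInsertNth 0 (by fun_prop) (by fun_prop))
  have hfaceS : Φ '' stdFace (m + 1) ⊆ Φ '' stdS (m + 1) := Set.image_mono fun s hs => hs.1
  have hfaceF : (μH[(m : ℝ)] : Measure E) (Φ '' stdFace (m + 1)) ≠ ⊤ := by
    rw [← himg2 0]
    exact (hfin 0 _ (isCompact_stdS m)).ne
  refine ⟨c 0, fun F F' hF hF' hlat => ?_⟩
  have hcoord : ∀ k, Continuous (B.coord k) := fun k =>
    LinearMap.continuous_of_finiteDimensional (B.coord k)
  have hFc : ContinuousOn F (Φ '' stdS (m + 1)) := by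
    rintro _ ⟨s, hs, rfl⟩
    exact (hF s hs).continuousAt.continuousWithinAt
  have hF'c : ∀ k, ContinuousOn (fun s => B.coord k (F' (Φ s) (B k))) (stdS (m + 1)) := by
    intro k
    refine (hcoord k).comp_continuousOn ?_
    exact (hF'.comp hΦc.continuousOn (Set.mapsTo_image _ _)).clm_apply continuousOn_const
  rw [integral_finsetSum, integral_finsetSum, Finset.mul_sum]
  · refine Finset.sum_congr rfl fun i _ => ?_
    have h1 := hc i (stdS m) (fun x => B.coord i (F x))
    rw [himg2] at h1
    rw [h1, hcc i]
    congr 1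
    rw [integral_stdS_deriv i (fun s => B.coord i (F (Φ s)))]
    · refine congrArg _ (funext fun s => ?_)
      have := congrFun (himg i) s
      exact congrArg (fun x => B.coord i (F x)) this
    · intro s hs
      have hu : HasDerivAt (fun t : ℝ => Φ (Function.update s i t)) (B i) (s i) := by
        have h2 : (fun t : ℝ => Φ (Function.update s i t)) =
            fun t => Φ s + (t - s i) • B i := by
          ext t
          have : Function.update s i t = s + (t - s i) • Pi.single i 1 := by
            ext k
            by_cases hk : k = i
            · subst hk; simp
            · simp [hk]
          rw [this]
          simp only [hΦ, map_add, map_smul, hLsingle]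
          abel
        rw [h2]
        simpa using (((hasDerivAt_id (s i)).sub_const (s i)).smul_const (B i)).const_add (Φ s)
      have h3 : HasFDerivAt F (F' (Φ s)) (Φ (Function.update s i (s i))) := by
        rw [Function.update_eq_self]; exact hF s hs
      have h4 := h3.comp_hasDerivAt (s i) hu
      exact (LinearMap.toContinuousLinearMap (B.coord i)).hasFDerivAt.comp_hasDerivAt (s i) h4
    · exact hF'c i
    · intro s hs h0; exact hlat s hs i h0
  · intro i _
    exact (hF'c i).integrableOn_compact (isCompact_stdS _)
  · intro i _
    exact (((hcoord i).comp_continuousOn hFc).mono hfaceS).integrableOn_of_subset_isCompact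
      hfaceC hfaceC.measurableSet subset_rfl hfaceF

lemma trace_combo {E : Type*} [NormedAddCommGroup E] [NormedSpace ℝ E] {m : ℕ}
    (B : Module.Basis (Fin m) ℝ E) (α β : E →ₗ[ℝ] ℝ) (A : E →ₗ[ℝ] E) (c₁ c₂ : ℝ) (g X : E)
    (F : E → E) (hF : ∀ v, F v = α v • g + c₁ • A v + β v • X + c₂ • v) :
    ∑ k, B.coord k (F (B k)) = α g + c₁ * LinearMap.trace ℝ E A + β X + c₂ * m := by
  have h1 : ∀ (γ : E →ₗ[ℝ] ℝ) (w : E), ∑ k, γ (B k) * B.coord k w = γ w := by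
    intro γ w
    conv_rhs => rw [← B.sum_repr w]
    rw [map_sum]
    refine Finset.sum_congr rfl fun k _ => ?_
    rw [map_smul, smul_eq_mul, Module.Basis.coord_apply, mul_comm]
  have h2 : LinearMap.trace ℝ E A = ∑ k, B.coord k (A (B k)) := by
    rw [LinearMap.trace_eq_matrix_trace ℝ B]
    simp [Matrix.trace, LinearMap.toMatrix_apply]
  simp only [hF, map_add, map_smul, smul_eq_mul, Finset.sum_add_distrib, h1, h2,
    ← Finset.mul_sum]
  simp

lemma rellich_point {m : ℕ} (u : EuclideanSpace ℝ (Fin m) → ℝ) (x a : EuclideanSpace ℝ (Fin m))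
    (hu : ContDiffAt ℝ 2 u x) (h : ℝ) (hh : 0 < h) (heig : -h ^ 2 * lap u x = u x)
    (B : Module.Basis (Fin m) ℝ (EuclideanSpace ℝ (Fin m))) :
    ∑ k, B.coord k (fderiv ℝ (fun y => (2 * ⟪gradient u y, y - a⟫ + (m - 2) * u y) • gradient u y
      + (-⟪gradient u y, gradient u y⟫ + 1 / h ^ 2 * u y ^ 2) • (y - a)) x (B k)) =
      2 / h ^ 2 * u x ^ 2 := by
  have hu1 : HasFDerivAt u (fderiv ℝ u x) x := (hu.differentiableAt (by norm_num)).hasFDerivAt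
  have hD : HasFDerivAt (fderiv ℝ u) (fderiv ℝ (fderiv ℝ u) x) x :=
    ((hu.fderiv_right (m := 1) (by norm_num)).differentiableAt (by norm_num)).hasFDerivAt
  set H := fderiv ℝ (fderiv ℝ u) x with hH
  have hsymm : ∀ v w, H v w = H w v := fun v w => by
    have : IsSymmSndFDerivAt ℝ u x := hu.isSymmSndFDerivAt (by simp)
    exact this v w
  let J : (EuclideanSpace ℝ (Fin m) →L[ℝ] ℝ) →L[ℝ] EuclideanSpace ℝ (Fin m) :=
    LinearMap.toContinuousLinearMap
      { toFun := fun l => (InnerProductSpace.toDual ℝ (EuclideanSpace ℝ (Fin m))).symm l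
        map_add' := fun l l' => by simp
        map_smul' := fun c l => by simp }
  let A : EuclideanSpace ℝ (Fin m) →L[ℝ] EuclideanSpace ℝ (Fin m) := J.comp H
  have hA : ∀ v w, ⟪A v, w⟫ = H v w := fun v w =>
    InnerProductSpace.toDual_symm_apply
  have hg : HasFDerivAt (gradient u) A x := J.hasFDerivAt.comp x hD
  have htr : LinearMap.trace ℝ _ (A : EuclideanSpace ℝ (Fin m) →ₗ[ℝ] EuclideanSpace ℝ (Fin m))
      = lap u x := by
    rw [LinearMap.trace_eq_sum_inner _ (EuclideanSpace.basisFun (Fin m) ℝ)]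
    unfold lap
    refine Finset.sum_congr rfl fun i _ => ?_
    rw [real_inner_comm]
    have h1 : HasFDerivAt (fun y => fderiv ℝ u y (EuclideanSpace.single i 1))
        (H.flip (EuclideanSpace.single i 1)) x := by
      have := hD.clm_apply (hasFDerivAt_const (EuclideanSpace.single i (1 : ℝ)) x)
      simpa using this
    rw [h1.fderiv]
    simp [hA]
  have hX : HasFDerivAt (fun y => y - a) (ContinuousLinearMap.id ℝ _) x :=
    (hasFDerivAt_id x).sub_const a
  have hF := ((((hg.inner ℝ hX).const_mul 2).add (hu1.const_mul ((m : ℝ) - 2))).smul hg).add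
    (((hg.inner ℝ hg).neg.add ((hu1.pow 2).const_mul (1 / h ^ 2))).smul hX)
  have hF2 := hF.fderiv
  have hlap : lap u x = - u x / h ^ 2 := by field_simp; linarith
  set g := gradient u x with hgdef
  have hgi : ∀ v, fderiv ℝ u x v = ⟪g, v⟫ := fun v => (inner_gradient_left (𝕜 := ℝ)).symm
  let I : EuclideanSpace ℝ (Fin m) → EuclideanSpace ℝ (Fin m) →ₗ[ℝ] ℝ := fun w =>
    (innerSL ℝ w).toLinearMap
  have key := trace_combo B
    ((2 : ℝ) • ((I (x - a)) ∘ₗ A.toLinearMap + I g) + ((m : ℝ) - 2) • I g)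
    ((-2 : ℝ) • ((I g) ∘ₗ A.toLinearMap) + (2 / h ^ 2 * u x) • I g)
    A.toLinearMap (2 * ⟪g, x - a⟫ + (m - 2) * u x)
    (-⟪g, g⟫ + 1 / h ^ 2 * u x ^ 2) g (x - a) 
    (fun v => fderiv ℝ (fun y => (2 * ⟪gradient u y, y - a⟫ + (m - 2) * u y) • gradient u y
      + (-⟪gradient u y, gradient u y⟫ + 1 / h ^ 2 * u y ^ 2) • (y - a)) x v) ?_
  · rw [key, htr, hlap]
    simp only [I, LinearMap.add_apply, LinearMap.smul_apply, LinearMap.comp_apply,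
      ContinuousLinearMap.coe_coe, innerSL_apply_apply, smul_eq_mul]
    rw [real_inner_comm (A g), real_inner_comm (A (x - a)), hA, hA, hsymm g (x - a)]
    field_simp
    ring
  · intro v
    refine (congrArg (fun f => f v) hF2).trans ?_
    simp [I, hgi, ← hgdef]
    rw [inner_sub_right, inner_sub_right, real_inner_comm x (A v), real_inner_comm a (A v),
      real_inner_comm g (A v)]
    module

/-- A function vanishing on a segment has vanishing derivative along it. -/
lemma fderiv_segment_zero {E : Type*} [NormedAddCommGroup E] [NormedSpace ℝ E] (u : E → ℝ)
    (x y : E) (hu : DifferentiableAt ℝ u x)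
    (h0 : ∀ t ∈ Set.Icc (0 : ℝ) 1, u (x + t • (y - x)) = 0) :
    fderiv ℝ u x (y - x) = 0 := by
  have h1 : HasDerivAt (fun t : ℝ => x + t • (y - x)) (y - x) 0 := by
    simpa using ((hasDerivAt_id (0 : ℝ)).smul_const (y - x)).const_add x
  have h2 : HasFDerivAt u (fderiv ℝ u x) (x + (0 : ℝ) • (y - x)) := by
    simpa using hu.hasFDerivAt
  have h3 : HasDerivWithinAt (fun t : ℝ => u (x + t • (y - x))) (fderiv ℝ u x (y - x))
      (Set.Icc 0 1) 0 := (h2.comp_hasDerivAt (0 : ℝ) h1).hasDerivWithinAt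
  have h4 : HasDerivWithinAt (fun t : ℝ => u (x + t • (y - x))) 0 (Set.Icc 0 1) 0 :=
    (hasDerivWithinAt_const (0 : ℝ) (Set.Icc (0 : ℝ) 1) (0 : ℝ)).congr h0 (h0 0 (by simp))
  exact (uniqueDiffOn_Icc (zero_lt_one' ℝ) 0 (by simp)).eq_deriv _ h3 h4

/-- **Equidistribution of Neumann data mass on simplices.**
Let `T ⊆ ℝⁿ` (`n ≥ 2`) be a nondegenerate simplex with vertices `p 0, …, p n`,
faces `G j = conv {p i : i ≠ j}` with outward unit normals `ω j`, and let `u` be a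
normalized Dirichlet eigenfunction: `-h²Δu = u` on `T`, `u = 0` on `∂T`, `∫_T u² = 1`.
Then for every face, `∫_{G j} |h ∂_{ω j} u|² dS = 2 Vol_{n-1}(G j) / (n Vol_n(T))`. -/
theorem neumann_data_equidistribution_simplex
    (n : ℕ) (hn : 2 ≤ n)
    (p : Fin (n + 1) → EuclideanSpace ℝ (Fin n))
    (hp : AffineIndependent ℝ p)
    (T : Set (EuclideanSpace ℝ (Fin n)))
    (hT : T = convexHull ℝ (Set.range p))
    (G : Fin (n + 1) → Set (EuclideanSpace ℝ (Fin n)))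
    (hG : ∀ j, G j = convexHull ℝ (p '' {i | i ≠ j}))
    (ω : Fin (n + 1) → EuclideanSpace ℝ (Fin n))
    (hω_unit : ∀ j, ‖ω j‖ = 1)
    (hω_tangent : ∀ j, ∀ x ∈ G j, ∀ y ∈ G j, ⟪x - y, ω j⟫ = 0)
    (hω_outward : ∀ j, ∀ x ∈ G j, ⟪p j - x, ω j⟫ < 0)
    (h : ℝ) (hh : 0 < h)
    (u : EuclideanSpace ℝ (Fin n) → ℝ)
    (U : Set (EuclideanSpace ℝ (Fin n))) (hU : IsOpen U) (hTU : T ⊆ U)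
    (hsmooth : ContDiffOn ℝ (⊤ : ℕ∞) u U)
    (heig : ∀ x ∈ T, -h ^ 2 * lap u x = u x)
    (hdirichlet : ∀ x ∈ frontier T, u x = 0)
    (hnorm : ∫ x in T, (u x) ^ 2 = 1) :
    ∀ j, ∫ x in G j, (h * ⟪gradient u x, ω j⟫) ^ 2 ∂(μH[(n - 1 : ℝ)]) =
      2 * (μH[(n - 1 : ℝ)] (G j)).toReal / (n * (volume T).toReal) := by
  intro j
  obtain ⟨m, rfl⟩ : ∃ m, n = m + 1 := ⟨n - 1, by omega⟩
  have hcast : (((m + 1 : ℕ) : ℝ) - 1) = (m : ℝ) := by push_cast; ring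
  rw [hcast]
  set a := p j with ha
  -- the basis of edge vectors issued from the vertex `p j`
  have hli : LinearIndependent ℝ (fun k : Fin (m + 1) => p (j.succAbove k) - p j) := by
    have h1 := (affineIndependent_iff_linearIndependent_vsub ℝ p j).1 hp
    have h2 := h1.comp (fun k : Fin (m + 1) => (⟨j.succAbove k, Fin.succAbove_ne j k⟩ : {x // x ≠ j}))
      (fun k l hkl => Fin.succAbove_right_injective (congrArg Subtype.val hkl))
    exact h2
  let B : Module.Basis (Fin (m + 1)) ℝ (EuclideanSpace ℝ (Fin (m + 1))) :=
    basisOfLinearIndependentOfCardEqFinrank hli (by simp)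
  have hB : ∀ k, B k = p (j.succAbove k) - a := fun k => by
    simp [B, ha]
  obtain ⟨c, hc⟩ := div_simplex a B
  set Φ : (Fin (m + 1) → ℝ) → EuclideanSpace ℝ (Fin (m + 1)) :=
    fun s => a + B.equivFun.symm s with hΦ
  have hΦsum : ∀ s, Φ s = a + ∑ k, s k • B k := fun s => by
    simp only [hΦ, Module.Basis.equivFun_symm_apply]
  have hΦcomb : ∀ s, Φ s = (1 - ∑ k, s k) • p j + ∑ k, s k • p (j.succAbove k) := fun s => by
    rw [hΦsum]
    simp only [hB, smul_sub, Finset.sum_sub_distrib, ← Finset.sum_smul, sub_smul, one_smul, ← ha]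
    abel
  have hΦc : Continuous Φ := continuous_const.add
    (LinearMap.continuous_of_finiteDimensional B.equivFun.symm.toLinearMap)
  have hΦconv : ∀ {s t : Fin (m + 1) → ℝ} {α β : ℝ}, α + β = 1 →
      Φ (α • s + β • t) = α • Φ s + β • Φ t := by
    intro s t α β hαβ
    simp only [hΦ, map_add, map_smul, smul_add]
    have : a = α • a + β • a := by rw [← add_smul, hαβ, one_smul]
    nth_rewrite 1 [this]
    abel
  have hΦsingle : ∀ k, Φ (Pi.single k 1) = p (j.succAbove k) := fun k => by
    rw [hΦsum, Finset.sum_eq_single k]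
    · simp [hB]
    · intro l _ hl; simp [hl]
    · simp
  have hΦ0 : Φ 0 = p j := by simp [hΦ, ha]
  have hsingleF : ∀ k : Fin (m + 1), (Pi.single k 1 : Fin (m + 1) → ℝ) ∈ stdFace (m + 1) := by
    intro k
    have hs : ∑ l, (Pi.single k 1 : Fin (m + 1) → ℝ) l = 1 := by simp
    refine ⟨⟨fun l => ?_, hs.le⟩, hs⟩
    by_cases hl : l = k
    · subst hl; simp
    · simp [hl]
  have hconvS : Convex ℝ (stdS (m + 1)) := by
    intro s hs t ht α β hα hβ hαβ
    refine ⟨fun k => ?_, ?_⟩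
    · have := hs.1 k; have := ht.1 k
      simp only [Pi.add_apply, Pi.smul_apply, smul_eq_mul]; positivity
    · simp only [Pi.add_apply, Pi.smul_apply, smul_eq_mul, Finset.sum_add_distrib,
        ← Finset.mul_sum]
      nlinarith [hs.2, ht.2]
  have hconvF : Convex ℝ (stdFace (m + 1)) := by
    intro s hs t ht α β hα hβ hαβ
    refine ⟨hconvS hs.1 ht.1 hα hβ hαβ, ?_⟩
    simp only [Pi.add_apply, Pi.smul_apply, smul_eq_mul, Finset.sum_add_distrib,
        ← Finset.mul_sum, hs.2, ht.2, mul_one, hαβ]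
  have hconvI : ∀ {K : Set (Fin (m + 1) → ℝ)}, Convex ℝ K → Convex ℝ (Φ '' K) := by
    rintro K hK _ ⟨s, hs, rfl⟩ _ ⟨t, ht, rfl⟩ α β hα hβ hαβ
    exact ⟨_, hK hs ht hα hβ hαβ, hΦconv hαβ⟩
  have hTΦ : T = Φ '' stdS (m + 1) := by
    rw [hT]
    apply Set.Subset.antisymm
    · refine convexHull_min ?_ (hconvI hconvS)
      rintro _ ⟨i, rfl⟩
      revert i
      rw [Fin.forall_iff_succAbove j]
      refine ⟨⟨0, ⟨fun k => le_rfl, by simp⟩, hΦ0⟩, fun k => ⟨_, (hsingleF k).1, hΦsingle k⟩⟩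
    · rintro _ ⟨s, hs, rfl⟩
      have h1 : Φ s = ∑ i : Fin (m + 2), (j.insertNth (α := fun _ => ℝ) (1 - ∑ k, s k) s i) • p i := by
        rw [Fin.sum_univ_succAbove _ j, hΦcomb]; simp
      rw [h1]
      refine (convex_convexHull ℝ _).sum_mem ?_ ?_ fun i _ => subset_convexHull ℝ _ ⟨i, rfl⟩
      · intro i _
        revert i
        rw [Fin.forall_iff_succAbove j]
        refine ⟨by simpa using hs.2, fun k => by simpa using hs.1 k⟩
      · rw [Fin.sum_univ_succAbove _ j]; simp
  have hGΦ : G j = Φ '' stdFace (m + 1) := by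
    rw [hG]
    apply Set.Subset.antisymm
    · refine convexHull_min ?_ (hconvI hconvF)
      rintro _ ⟨i, hi, rfl⟩
      obtain ⟨k, rfl⟩ := Fin.exists_succAbove_eq hi
      exact ⟨_, hsingleF k, hΦsingle k⟩
    · rintro _ ⟨s, hs, rfl⟩
      rw [hΦcomb, hs.2, sub_self, zero_smul, zero_add]
      refine (convex_convexHull ℝ _).sum_mem (fun k _ => hs.1.1 k) hs.2 fun k _ =>
        subset_convexHull ℝ _ ⟨_, Fin.succAbove_ne j k, rfl⟩
  have hΦinj : Function.Injective Φ := fun s t hst =>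
    B.equivFun.symm.injective (add_left_cancel hst)
  have hTcl : IsCompact T := by rw [hTΦ]; exact (isCompact_stdS _).image hΦc
  have hfaceC : IsCompact (G j) := by
    rw [hG]; exact (Set.toFinite _).isCompact_convexHull ℝ
  -- boundary points
  have hfront : ∀ s ∈ stdS (m + 1), ∀ d : Fin (m + 1) → ℝ,
      (∀ ε : ℝ, 0 < ε → s + ε • d ∉ stdS (m + 1)) → Φ s ∈ frontier T := by
    intro s hs d hd
    rw [hTcl.isClosed.frontier_eq]
    refine ⟨by rw [hTΦ]; exact ⟨s, hs, rfl⟩, fun hint => ?_⟩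
    have hcont : Filter.Tendsto (fun ε : ℝ => Φ (s + ε • d)) (nhdsWithin 0 (Set.Ioi 0))
        (nhds (Φ s)) := by
      have : Continuous (fun ε : ℝ => Φ (s + ε • d)) := hΦc.comp (by fun_prop)
      have h2 := this.tendsto 0
      simp only [zero_smul, add_zero] at h2
      exact h2.mono_left nhdsWithin_le_nhds
    have h3 := hcont.eventually (mem_interior_iff_mem_nhds.1 hint)
    obtain ⟨ε, hε1, hε2⟩ := (h3.and self_mem_nhdsWithin).exists
    have hε3 : Φ (s + ε • d) ∈ T := hε1
    rw [hTΦ, hΦinj.mem_set_image] at hε3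
    exact hd ε hε2 hε3
  have hu_lat : ∀ s ∈ stdS (m + 1), ∀ k, s k = 0 → u (Φ s) = 0 := by
    intro s hs k hk
    refine hdirichlet _ (hfront s hs (-Pi.single k 1) fun ε hε hmem => ?_)
    have := hmem.1 k
    simp [hk] at this
    linarith
  have hu_top : ∀ s ∈ stdFace (m + 1), u (Φ s) = 0 := by
    intro s hs
    refine hdirichlet _ (hfront s hs.1 (Pi.single 0 1) fun ε hε hmem => ?_)
    have := hmem.2
    simp only [Pi.add_apply, Pi.smul_apply, smul_eq_mul, Finset.sum_add_distrib,
      ← Finset.mul_sum, hs.2] at this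
    simp at this
    linarith
  have hΦU : ∀ s ∈ stdS (m + 1), Φ s ∈ U := fun s hs => hTU (by rw [hTΦ]; exact ⟨s, hs, rfl⟩)
  have hudiff : ∀ s ∈ stdS (m + 1), DifferentiableAt ℝ u (Φ s) := fun s hs =>
    ((hsmooth.contDiffAt (hU.mem_nhds (hΦU s hs))).differentiableAt (by simp))
  have hcoordX : ∀ s k, B.coord k (Φ s - a) = s k := fun s k => by
    simp [hΦ, Module.Basis.equivFun_symm_apply, Finsupp.single_apply]
  -- the Rellich vector field
  set F : EuclideanSpace ℝ (Fin (m + 1)) → EuclideanSpace ℝ (Fin (m + 1)) :=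
    fun y => (2 * ⟪gradient u y, y - a⟫ + (((m + 1 : ℕ) : ℝ) - 2) * u y) • gradient u y
      + (-⟪gradient u y, gradient u y⟫ + 1 / h ^ 2 * u y ^ 2) • (y - a) with hFdef
  have htwo : (2 : WithTop ℕ∞) ≤ ((⊤ : ℕ∞) : WithTop ℕ∞) :=
    (WithTop.coe_le_coe (b := (2 : ℕ∞))).2 le_top
  have htwo' : (1 + 1 : WithTop ℕ∞) ≤ ((⊤ : ℕ∞) : WithTop ℕ∞) := by
    rw [one_add_one_eq_two]; exact htwo
  have hgradC : ContDiffOn ℝ 1 (gradient u) U := by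
    have h1 : ContDiffOn ℝ 1 (fderiv ℝ u) U := hsmooth.fderiv_of_isOpen hU htwo'
    have h2 : ContDiff ℝ 1 (fun l : StrongDual ℝ (EuclideanSpace ℝ (Fin (m + 1))) =>
        (InnerProductSpace.toDual ℝ (EuclideanSpace ℝ (Fin (m + 1)))).symm l) := by
      exact (InnerProductSpace.toDual ℝ (EuclideanSpace ℝ (Fin (m + 1)))).symm.contDiff
    exact h2.comp_contDiffOn h1
  have hu1 : ContDiffOn ℝ 1 u U := hsmooth.of_le (by exact_mod_cast le_top)
  have hXC : ContDiffOn ℝ 1 (fun y : EuclideanSpace ℝ (Fin (m + 1)) => y - a) U :=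
    contDiffOn_id.sub contDiffOn_const
  have hFC : ContDiffOn ℝ 1 F U :=
    (((contDiffOn_const.mul (hgradC.inner ℝ hXC)).add (contDiffOn_const.mul hu1)).smul hgradC).add
      (((hgradC.inner ℝ hgradC).neg.add (contDiffOn_const.mul (hu1.pow 2))).smul hXC)
  have hmain := hc F (fderiv ℝ F) ?_ ?_ ?_
  rotate_left
  · intro s hs
    exact ((hFC.contDiffAt (hU.mem_nhds (hΦU s hs))).differentiableAt (by simp)).hasFDerivAt
  · refine (hFC.continuousOn_fderiv_of_isOpen hU le_rfl).mono ?_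
    rintro _ ⟨s, hs, rfl⟩; exact hΦU s hs
  · intro s hs k hk
    change B.coord k (F (Φ s)) = 0
    have h1 : fderiv ℝ u (Φ s) (a - Φ s) = 0 := by
      refine fderiv_segment_zero u (Φ s) a (hudiff s hs) fun t ht => ?_
      have h2 : Φ s + t • (a - Φ s) = Φ ((1 - t) • s) := by
        simp only [hΦ, map_smul]
        module
      rw [h2]
      have h0S : (0 : Fin (m + 1) → ℝ) ∈ stdS (m + 1) := ⟨fun k => le_rfl, by simp⟩
      have h3 := hconvS hs h0S (sub_nonneg.2 ht.2) ht.1 (by ring)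
      rw [smul_zero, add_zero] at h3
      exact hu_lat _ h3 k (by simp [hk])
    have h4 : ⟪gradient u (Φ s), Φ s - a⟫ = 0 := by
      rw [inner_gradient_left, ← neg_sub a, map_neg, h1, neg_zero]
    simp only [hFdef, h4, hu_lat s hs k hk, map_add, map_smul, hcoordX, hk]
    simp
  have hX := hc (fun y => y - a) (fun _ => ContinuousLinearMap.id ℝ _) ?_ ?_ ?_
  rotate_left
  · intro s hs; exact (hasFDerivAt_id _).sub_const a
  · exact continuousOn_const
  · intro s hs k hk
    exact (hcoordX s k).trans hk
  change ∫ x in Φ '' stdFace (m + 1), _ ∂_ = c * ∫ s in _, ∑ k, B.coord k (fderiv ℝ F (Φ s) (B k))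
    at hmain
  change ∫ x in Φ '' stdFace (m + 1), _ ∂_ = _ at hX
  rw [← hGΦ] at hmain hX
  -- top face integrands
  have htop : Set.EqOn (fun x => ∑ k, B.coord k (F x)) (fun x => ⟪gradient u x, ω j⟫ ^ 2) (G j) := by
    intro x hx
    rw [hGΦ] at hx
    obtain ⟨s, hs, rfl⟩ := hx
    have hpG : ∀ k, p (j.succAbove k) ∈ G j := fun k => by
      rw [hGΦ]; exact ⟨_, hsingleF k, hΦsingle k⟩
    set d := ⟪B 0, ω j⟫ with hd
    have hd0 : 0 < d := by
      have := hω_outward j _ (hpG 0)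
      rw [hd, hB, ← neg_sub, inner_neg_left, ha]
      linarith
    have hdk : ∀ k, ⟪B k, ω j⟫ = d := by
      intro k
      have := hω_tangent j _ (hpG k) _ (hpG 0)
      have h2 : p (j.succAbove k) - p (j.succAbove 0) = B k - B 0 := by rw [hB, hB]; abel
      rw [h2, inner_sub_left] at this
      linarith
    have hlin : ∀ v, ⟪v, ω j⟫ = d * ∑ k, B.coord k v := by
      intro v
      conv_lhs => rw [← B.sum_repr v]
      rw [sum_inner, Finset.mul_sum]
      refine Finset.sum_congr rfl fun k _ => ?_
      rw [inner_smul_left, hdk, Module.Basis.coord_apply]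
      simp [mul_comm]
    set δ := fderiv ℝ u (Φ s) (B 0) with hδ
    have hseg : ∀ k, fderiv ℝ u (Φ s) (p (j.succAbove k) - Φ s) = 0 := by
      intro k
      refine fderiv_segment_zero u _ _ (hudiff s hs.1) fun t ht => ?_
      have h2 : Φ s + t • (p (j.succAbove k) - Φ s) = Φ ((1 - t) • s + t • Pi.single k 1) := by
        rw [hΦconv (by ring), hΦsingle]
        module
      rw [h2]
      exact hu_top _ (hconvF hs (hsingleF k) (sub_nonneg.2 ht.2) ht.1 (by ring))
    have hδk : ∀ k, fderiv ℝ u (Φ s) (B k) = δ := by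
      intro k
      have h2 : B k = (p (j.succAbove k) - Φ s) - (p (j.succAbove 0) - Φ s) + B 0 := by
        rw [hB, hB]; abel
      rw [h2, map_add, map_sub, hseg, hseg]; simp [hδ]
    have hgrad : gradient u (Φ s) = (δ / d) • ω j := by
      refine ext_inner_right ℝ fun v => ?_
      rw [inner_gradient_left, inner_smul_left, real_inner_comm, hlin]
      conv_lhs => rw [← B.sum_repr v]
      rw [map_sum]
      simp only [map_smul, hδk, smul_eq_mul, ← Finset.sum_mul, Module.Basis.coord_apply]
      simp
      field_simp
    have hsX : ∑ k, B.coord k (Φ s - a) = 1 := by simp only [hcoordX]; exact hs.2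
    have hXω : ⟪Φ s - a, ω j⟫ = d := by rw [hlin, hsX, mul_one]
    have hωω : ⟪ω j, ω j⟫ = 1 := by rw [real_inner_self_eq_norm_sq, hω_unit]; norm_num
    have hcω : ∑ k, B.coord k (ω j) = 1 / d := by
      have := hlin (ω j)
      rw [hωω] at this
      field_simp; linarith
    have hXω' : ⟪ω j, Φ s - a⟫ = d := by rw [real_inner_comm]; exact hXω
    simp only [hFdef, hu_top s hs, map_add, map_smul, Finset.sum_add_distrib, smul_eq_mul,
      ← Finset.mul_sum, hsX, hgrad, hcω, inner_smul_left, inner_smul_right, hωω, hXω']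
    simp
    field_simp
    ring
  have hdiv : Set.EqOn (fun s => ∑ k, B.coord k (fderiv ℝ F (Φ s) (B k)))
      (fun s => 2 / h ^ 2 * u (Φ s) ^ 2) (stdS (m + 1)) := by
    intro s hs
    refine rellich_point u (Φ s) a ?_ h hh (heig _ (by rw [hTΦ]; exact ⟨s, hs, rfl⟩)) B
    exact (hsmooth.contDiffAt (hU.mem_nhds (hΦU s hs))).of_le htwo
  rw [setIntegral_congr_fun hfaceC.measurableSet htop,
    setIntegral_congr_fun (isCompact_stdS _).measurableSet hdiv, integral_const_mul] at hmain
  have hone : Set.EqOn (fun x => ∑ k, B.coord k (x - a)) (fun _ => (1 : ℝ)) (G j) := by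
    intro x hx
    rw [hGΦ] at hx
    obtain ⟨s, hs, rfl⟩ := hx
    simp only [hcoordX]; exact hs.2
  rw [setIntegral_congr_fun hfaceC.measurableSet hone] at hX
  have hX2 : ((μH[(m : ℝ)] : Measure (EuclideanSpace ℝ (Fin (m + 1)))) (G j)).toReal =
      c * ((m + 1) * (volume (stdS (m + 1))).toReal) := by
    simpa [Measure.real, mul_comm] using hX
  -- change of variables in the bulk
  obtain ⟨D, hD⟩ := exists_const_param (volume : Measure (EuclideanSpace ℝ (Fin (m + 1)))) a
    B.equivFun.symm.toLinearMap B.equivFun.symm.injective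
    (fun K hK => (hK.image hΦc).measure_lt_top)
  have hD1 : D * ∫ s in stdS (m + 1), u (Φ s) ^ 2 = 1 := by
    rw [← hnorm, hTΦ]
    exact (hD (stdS (m + 1)) (fun x => u x ^ 2)).symm
  have hD2 : (volume T).toReal = D * (volume (stdS (m + 1))).toReal := by
    have := hD (stdS (m + 1)) (fun _ => 1)
    change ∫ x in Φ '' stdS (m + 1), (1 : ℝ) = _ at this
    rw [← hTΦ] at this
    simpa [Measure.real] using this
  have hV := volume_stdS_pos (m + 1)
  have hD0 : D ≠ 0 := by rintro rfl; simp at hD1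
  have hI : ∫ s in stdS (m + 1), u (Φ s) ^ 2 = 1 / D := by
    field_simp; linarith
  simp only [mul_pow]
  rw [integral_const_mul, hmain, hX2, hD2, hI]
  push_cast
  have : (m : ℝ) + 1 ≠ 0 := by positivity
  field_simp
end

section
/- Let P₀, P₁, P₂ and Q₀, Q₁, Q₂ be two affinely independent triples of points in ℝ², defining triangles T = conv{P₀, P₁, P₂} and T' = conv{Q₀, Q₁, Q₂}. Let h, h' > 0 and let u, u' be normalized Dirichlet eigenfunctions on T and T' respectively. Suppose that for each pair {i, j} ⊆ {0, 1, 2} with i ≠ j, ∫_{[Pᵢ, Pⱼ]} |h ∂_ν u|² dS = ∫_{[Qᵢ, Qⱼ]} |h' ∂_ν u'|² dS, where [Pᵢ, Pⱼ] denotes the side joining Pᵢ and Pⱼ and ν is the outward unit normal to that side. Then the corresponding side lengths are equal: dist(Pᵢ, Pⱼ) = dist(Qᵢ, Qⱼ) for all i ≠ j; that is, T and T' are congruent (T' is the image of T under an isometry of ℝ²). -/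
open MeasureTheory RealInnerProductSpace

def stdTri : Set (ℝ × ℝ) := {q | 0 ≤ q.1 ∧ 0 ≤ q.2 ∧ q.1 + q.2 ≤ 1}

lemma stdTri_closed : IsClosed stdTri := by
  have h1 : IsClosed {q : ℝ × ℝ | 0 ≤ q.1} := isClosed_le continuous_const continuous_fst
  have h2 : IsClosed {q : ℝ × ℝ | 0 ≤ q.2} := isClosed_le continuous_const continuous_snd
  have h3 : IsClosed {q : ℝ × ℝ | q.1 + q.2 ≤ 1} :=
    isClosed_le (continuous_fst.add continuous_snd) continuous_const
  exact h1.inter (h2.inter h3)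

lemma stdTri_compact : IsCompact stdTri := by
  refine (isCompact_Icc (a := ((0 : ℝ), (0 : ℝ))) (b := (1, 1))).of_isClosed_subset
    stdTri_closed ?_
  rintro ⟨x, y⟩ ⟨h1, h2, h3⟩
  simp only at h1 h2 h3
  refine ⟨⟨h1, h2⟩, ⟨?_, ?_⟩⟩ <;> simp only <;> linarith

lemma tri_ftc_y (g g' : ℝ × ℝ → ℝ) (hc : ContinuousOn g' stdTri)
    (hd : ∀ q ∈ stdTri, HasDerivAt (fun y => g (q.1, y)) (g' q) q.2) :
    ∫ q in stdTri, g' q = ∫ x in (0 : ℝ)..1, (g (x, 1 - x) - g (x, 0)) := by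
  have hm := stdTri_closed.measurableSet
  have hi : IntegrableOn g' stdTri := hc.integrableOn_compact stdTri_compact
  rw [← integral_indicator hm]
  rw [← integrable_indicator_iff hm] at hi
  rw [Measure.volume_eq_prod] at hi ⊢
  rw [integral_prod _ hi, intervalIntegral.integral_of_le zero_le_one,
    ← integral_Icc_eq_integral_Ioc, ← integral_indicator measurableSet_Icc]
  congr 1
  ext x
  by_cases hx : x ∈ Set.Icc (0 : ℝ) 1
  · rw [Set.indicator_of_mem hx]
    have h1 : (fun y => stdTri.indicator g' (x, y))
        = (Set.Icc 0 (1 - x)).indicator (fun y => g' (x, y)) := by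
      ext y
      by_cases hy : y ∈ Set.Icc 0 (1 - x)
      · rw [Set.indicator_of_mem hy, Set.indicator_of_mem]
        exact ⟨hx.1, hy.1, by have := hy.2; simp only; linarith⟩
      · rw [Set.indicator_of_notMem hy, Set.indicator_of_notMem]
        rintro ⟨_, h2, h3⟩
        simp only at h2 h3
        exact hy ⟨h2, by linarith⟩
    have hle : (0 : ℝ) ≤ 1 - x := by linarith [hx.2]
    have hmem : ∀ y ∈ Set.Icc 0 (1 - x), (x, y) ∈ stdTri := fun y hy =>
      ⟨hx.1, hy.1, by have := hy.2; simp only; linarith⟩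
    rw [h1, integral_indicator measurableSet_Icc, integral_Icc_eq_integral_Ioc,
      ← intervalIntegral.integral_of_le hle]
    rw [intervalIntegral.integral_eq_sub_of_hasDerivAt (f := fun y => g (x, y))]
    · intro y hy
      rw [Set.uIcc_of_le hle] at hy
      exact hd (x, y) (hmem y hy)
    · apply ContinuousOn.intervalIntegrable
      rw [Set.uIcc_of_le hle]
      exact hc.comp (by fun_prop) hmem
  · rw [Set.indicator_of_notMem hx]
    have : (fun y => stdTri.indicator g' (x, y)) = fun _ => 0 := by
      ext y
      rw [Set.indicator_of_notMem]
      rintro ⟨h1, h2, h3⟩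
      simp only at h1 h2 h3
      exact hx ⟨h1, by linarith⟩
    rw [this]; simp

lemma tri_ftc_x (g g' : ℝ × ℝ → ℝ) (hc : ContinuousOn g' stdTri)
    (hd : ∀ q ∈ stdTri, HasDerivAt (fun x => g (x, q.2)) (g' q) q.1) :
    ∫ q in stdTri, g' q = ∫ y in (0 : ℝ)..1, (g (1 - y, y) - g (0, y)) := by
  have hsw : ∀ q : ℝ × ℝ, q ∈ stdTri → q.swap ∈ stdTri := by
    rintro ⟨x, y⟩ ⟨h1, h2, h3⟩
    exact ⟨h2, h1, by simpa [add_comm] using h3⟩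
  have := tri_ftc_y (fun q => g q.swap) (fun q => g' q.swap)
    (hc.comp continuous_swap.continuousOn hsw) (fun q hq => hd q.swap (hsw q hq))
  simp only [Prod.swap_prod_mk] at this
  rw [← this]
  have hp := (Measure.measurePreserving_swap (μ := (volume : Measure ℝ)) (ν := (volume : Measure ℝ)))
  have h2 := hp.setIntegral_preimage_emb MeasurableEquiv.prodComm.measurableEmbedding g' stdTri
  rw [Measure.volume_eq_prod, ← h2]
  congr 2
  ext q
  exact ⟨fun h => by simpa using hsw _ h, hsw q⟩

abbrev E2 := EuclideanSpace ℝ (Fin 2)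

def triMap (p a b : E2) (q : ℝ × ℝ) : E2 := p + q.1 • a + q.2 • b

def det2 (a b : E2) : ℝ := a 0 * b 1 - a 1 * b 0

lemma triMap_integral (p a b : E2) (hD : det2 a b ≠ 0) (f : E2 → ℝ) :
    ∫ z in triMap p a b '' stdTri, f z = |det2 a b| * ∫ q in stdTri, f (triMap p a b q) := by
  let e : E2 ≃ᵐ ℝ × ℝ := (MeasurableEquiv.toLp 2 (Fin 2 → ℝ)).symm.trans MeasurableEquiv.finTwoArrow
  have he : MeasurePreserving e volume volume :=
    (volume_preserving_finTwoArrow ℝ).comp (EuclideanSpace.volume_preserving_symm_measurableEquiv_toLp (Fin 2))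
  have he' : ∀ z : E2, e z = (z 0, z 1) := fun z => rfl
  let M : Matrix (Fin 2) (Fin 2) ℝ := !![a 0, b 0; a 1, b 1]
  let L : E2 →L[ℝ] E2 := LinearMap.toContinuousLinearMap (Matrix.toLpLin 2 2 M)
  have hL : ∀ z : E2, p + L z = triMap p a b (z 0, z 1) := by
    intro z
    ext i
    fin_cases i <;> simp [L, M, triMap, Matrix.mulVec, dotProduct, Fin.sum_univ_two] <;> ring
  have hdet : L.det = det2 a b := by
    simp only [L, ContinuousLinearMap.det, LinearMap.coe_toContinuousLinearMap]
    rw [LinearMap.det_toLpLin]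
    simp [M, Matrix.det_fin_two, det2]; ring
  have hinj : Function.Injective L := by
    have : IsUnit (LinearMap.det (L : E2 →ₗ[ℝ] E2)) := by
      have : LinearMap.det (L : E2 →ₗ[ℝ] E2) = det2 a b := hdet
      rw [this]; exact isUnit_iff_ne_zero.mpr hD
    intro x y hxy
    exact (LinearMap.equivOfIsUnitDet this).injective (by simpa using hxy)
  have himg : triMap p a b '' stdTri = (fun z => p + L z) '' (e ⁻¹' stdTri) := by
    ext w
    constructor
    · rintro ⟨q, hq, rfl⟩
      refine ⟨e.symm q, by simpa using hq, ?_⟩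
      simp only [hL, ← he', MeasurableEquiv.apply_symm_apply]
    · rintro ⟨z, hz, rfl⟩
      exact ⟨e z, hz, by simp only [hL, he']⟩
  rw [himg, integral_image_eq_integral_abs_det_fderiv_smul volume
    (e.measurable stdTri_closed.measurableSet) (f' := fun _ => L)
    (fun z _ => (L.hasFDerivAt.const_add p).hasFDerivWithinAt)
    (fun x _ y _ h => hinj (add_left_cancel h))]
  simp only [hL, hdet, smul_eq_mul]
  rw [integral_const_mul]
  congr 1
  rw [← he.setIntegral_preimage_emb e.measurableEmbedding]
  rfl

lemma segment_integral (B C : E2) (hne : B ≠ C) (f : E2 → ℝ) :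
    ∫ z in segment ℝ B C, f z ∂(μH[(1 : ℝ)]) =
      dist B C * ∫ t in (0 : ℝ)..1, f (B + t • (C - B)) := by
  have hl : 0 < dist B C := dist_pos.mpr hne
  set l := dist B C with hldef
  have hnorm : ‖C - B‖ = l := by rw [hldef, dist_comm, dist_eq_norm]
  let γ : ℝ → E2 := fun s => B + (s * l⁻¹) • (C - B)
  have hγ : Isometry γ := by
    refine Isometry.of_dist_eq fun s t => ?_
    simp only [γ, dist_add_left]
    rw [dist_eq_norm, ← sub_smul, norm_smul, hnorm, ← sub_mul, norm_mul, Real.dist_eq,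
      Real.norm_eq_abs, norm_inv, Real.norm_of_nonneg hl.le]
    field_simp
  have hmap := hγ.map_hausdorffMeasure (d := 1) (Or.inl zero_le_one)
  rw [hausdorffMeasure_real] at hmap
  have hseg : segment ℝ B C = γ '' Set.Icc 0 l := by
    rw [segment_eq_image']
    ext z
    constructor
    · rintro ⟨t, ht, rfl⟩
      refine ⟨t * l, ⟨by have := ht.1; positivity, by nlinarith [ht.2]⟩, ?_⟩
      simp only [γ]
      rw [mul_assoc, mul_inv_cancel₀ hl.ne', mul_one]
    · rintro ⟨s, hs, rfl⟩
      refine ⟨s * l⁻¹, ⟨mul_nonneg hs.1 (by positivity), ?_⟩, rfl⟩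
      rw [← div_eq_mul_inv]
      exact (div_le_one hl).mpr hs.2
  have hsub : segment ℝ B C ⊆ Set.range γ := hseg ▸ Set.image_subset_range _ _
  have hms : MeasurableSet (segment ℝ B C) := by
    rw [hseg]; exact (isCompact_Icc.image hγ.continuous).measurableSet
  have h1 : (μH[(1:ℝ)] : Measure E2).restrict (segment ℝ B C)
      = (Measure.map γ volume).restrict (segment ℝ B C) := by
    rw [hmap, Measure.restrict_restrict hms, Set.inter_eq_left.mpr hsub]
  rw [h1, hγ.isClosedEmbedding.measurableEmbedding.setIntegral_map, hseg,
    Set.preimage_image_eq _ hγ.injective, integral_Icc_eq_integral_Ioc,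
    ← intervalIntegral.integral_of_le hl.le]
  simp only [γ]
  have := intervalIntegral.integral_comp_mul_right (a := 0) (b := l)
    (fun t => f (B + t • (C - B))) (inv_ne_zero hl.ne')
  rw [this]
  simp [hl.ne']

lemma triMap_cont (p a b : E2) : Continuous (triMap p a b) := by
  unfold triMap; fun_prop

lemma e2_decomp (a : E2) :
    a = a 0 • EuclideanSpace.single 0 (1 : ℝ) + a 1 • EuclideanSpace.single 1 (1 : ℝ) := by
  ext i; fin_cases i <;> simp

lemma clm_decomp (L : E2 →L[ℝ] ℝ) (a : E2) :
    L a = a 0 * L (EuclideanSpace.single 0 1) + a 1 * L (EuclideanSpace.single 1 1) := by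
  conv_lhs => rw [e2_decomp a]
  simp only [map_add, map_smul, smul_eq_mul]

lemma tri_div (p a b : E2) (U : Set E2) (hU : IsOpen U)
    (hsub : ∀ q ∈ stdTri, triMap p a b q ∈ U) (V0 V1 : E2 → ℝ)
    (hV0 : ContDiffOn ℝ 1 V0 U) (hV1 : ContDiffOn ℝ 1 V1 U) :
    det2 a b * ∫ q in stdTri, (fderiv ℝ V0 (triMap p a b q) (EuclideanSpace.single 0 1)
        + fderiv ℝ V1 (triMap p a b q) (EuclideanSpace.single 1 1)) =
      (∫ t in (0 : ℝ)..1, ((b 1 * V0 (triMap p a b (1 - t, t)) - b 0 * V1 (triMap p a b (1 - t, t)))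
        - (b 1 * V0 (triMap p a b (0, t)) - b 0 * V1 (triMap p a b (0, t))))) +
      ∫ t in (0 : ℝ)..1, ((a 0 * V1 (triMap p a b (t, 1 - t)) - a 1 * V0 (triMap p a b (t, 1 - t)))
        - (a 0 * V1 (triMap p a b (t, 0)) - a 1 * V0 (triMap p a b (t, 0)))) := by
  have hd0 : ∀ q ∈ stdTri, HasFDerivAt V0 (fderiv ℝ V0 (triMap p a b q)) (triMap p a b q) :=
    fun q hq => ((hV0.differentiableOn one_ne_zero).differentiableAt
      (hU.mem_nhds (hsub q hq))).hasFDerivAt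
  have hd1 : ∀ q ∈ stdTri, HasFDerivAt V1 (fderiv ℝ V1 (triMap p a b q)) (triMap p a b q) :=
    fun q hq => ((hV1.differentiableOn one_ne_zero).differentiableAt
      (hU.mem_nhds (hsub q hq))).hasFDerivAt
  have hc0 : ∀ v, ContinuousOn (fun q => fderiv ℝ V0 (triMap p a b q) v) stdTri := fun v =>
    ((hV0.continuousOn_fderiv_of_isOpen hU le_rfl).comp
      (triMap_cont p a b).continuousOn hsub).clm_apply continuousOn_const
  have hc1 : ∀ v, ContinuousOn (fun q => fderiv ℝ V1 (triMap p a b q) v) stdTri := fun v =>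
    ((hV1.continuousOn_fderiv_of_isOpen hU le_rfl).comp
      (triMap_cont p a b).continuousOn hsub).clm_apply continuousOn_const
  have hx : ∀ q : ℝ × ℝ, HasDerivAt (fun x => triMap p a b (x, q.2)) a q.1 := by
    intro q
    simpa [triMap] using (((hasDerivAt_id q.1).smul_const a).const_add p).add_const (q.2 • b)
  have hy : ∀ q : ℝ × ℝ, HasDerivAt (fun y => triMap p a b (q.1, y)) b q.2 := by
    intro q
    simpa [triMap] using ((hasDerivAt_id q.2).smul_const b).const_add (p + q.1 • a)
  have cF : ContinuousOn (fun q => b 1 * fderiv ℝ V0 (triMap p a b q) a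
      - b 0 * fderiv ℝ V1 (triMap p a b q) a) stdTri :=
    (continuousOn_const.mul (hc0 a)).sub (continuousOn_const.mul (hc1 a))
  have cG : ContinuousOn (fun q => a 0 * fderiv ℝ V1 (triMap p a b q) b
      - a 1 * fderiv ℝ V0 (triMap p a b q) b) stdTri :=
    (continuousOn_const.mul (hc1 b)).sub (continuousOn_const.mul (hc0 b))
  have e1 := tri_ftc_x (fun q => b 1 * V0 (triMap p a b q) - b 0 * V1 (triMap p a b q)) _ cF
    (fun q hq => (((hd0 q hq).comp_hasDerivAt q.1 (hx q)).const_mul (b 1)).sub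
      (((hd1 q hq).comp_hasDerivAt q.1 (hx q)).const_mul (b 0)))
  have e2 := tri_ftc_y (fun q => a 0 * V1 (triMap p a b q) - a 1 * V0 (triMap p a b q)) _ cG
    (fun q hq => (((hd1 q hq).comp_hasDerivAt q.2 (hy q)).const_mul (a 0)).sub
      (((hd0 q hq).comp_hasDerivAt q.2 (hy q)).const_mul (a 1)))
  rw [← e1, ← e2, ← integral_add (cF.integrableOn_compact stdTri_compact)
    (cG.integrableOn_compact stdTri_compact), ← integral_const_mul]
  congr 1
  ext q
  rw [clm_decomp _ a, clm_decomp _ b, clm_decomp (fderiv ℝ V1 _) a, clm_decomp (fderiv ℝ V0 _) b]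
  unfold det2
  ring

lemma deriv_along (u : E2 → ℝ) (z v : E2) (t : ℝ) (ht : t ∈ Set.Icc (0 : ℝ) 1)
    (hd : DifferentiableAt ℝ u (z + t • v))
    (h0 : ∀ s ∈ Set.Icc (0 : ℝ) 1, u (z + s • v) = 0) :
    fderiv ℝ u (z + t • v) v = 0 := by
  have h1 : HasDerivAt (fun s : ℝ => z + s • v) v t := by
    simpa using ((hasDerivAt_id t).smul_const v).const_add z
  have h2 := (hd.hasFDerivAt.comp_hasDerivAt t h1).hasDerivWithinAt (s := Set.Icc 0 1)
  have h3 : HasDerivWithinAt (u ∘ fun s : ℝ => z + s • v) 0 (Set.Icc 0 1) t :=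
    (hasDerivWithinAt_const t (Set.Icc (0 : ℝ) 1) (0 : ℝ)).congr (fun s hs => h0 s hs) (h0 t ht)
  exact (uniqueDiffOn_Icc zero_lt_one t ht).eq_deriv _ h2 h3

lemma boundary_alg (a0 a1 b0 b1 n0 n1 f0 f1 s : ℝ) (hn : n0 ^ 2 + n1 ^ 2 = 1)
    (hnt : (b0 - a0) * n0 + (b1 - a1) * n1 = 0) (hft : (b0 - a0) * f0 + (b1 - a1) * f1 = 0)
    (hne : a0 * b1 - a1 * b0 ≠ 0) :
    (b1 * (2 * (((1 - s) * a0 + s * b0) * f0 + ((1 - s) * a1 + s * b1) * f1) * f0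
        - (f0 ^ 2 + f1 ^ 2) * ((1 - s) * a0 + s * b0))
      - b0 * (2 * (((1 - s) * a0 + s * b0) * f0 + ((1 - s) * a1 + s * b1) * f1) * f1
        - (f0 ^ 2 + f1 ^ 2) * ((1 - s) * a1 + s * b1)))
      + (a0 * (2 * (((1 - s) * a0 + s * b0) * f0 + ((1 - s) * a1 + s * b1) * f1) * f1
        - (f0 ^ 2 + f1 ^ 2) * ((1 - s) * a1 + s * b1))
      - a1 * (2 * (((1 - s) * a0 + s * b0) * f0 + ((1 - s) * a1 + s * b1) * f1) * f0
        - (f0 ^ 2 + f1 ^ 2) * ((1 - s) * a0 + s * b0)))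
      = (a0 * b1 - a1 * b0) * (f0 * n0 + f1 * n1) ^ 2 := by
  -- `f` is parallel to `n`
  have hpar : f0 * n1 - f1 * n0 = 0 := by
    have e1 : (b0 - a0) * (f0 * n1 - f1 * n0) = 0 := by linear_combination n1 * hft - f1 * hnt
    have e2 : (b1 - a1) * (f0 * n1 - f1 * n0) = 0 := by linear_combination f0 * hnt - n0 * hft
    have e3 : (a0 * b1 - a1 * b0) * (f0 * n1 - f1 * n0) = 0 := by
      linear_combination a0 * e2 - a1 * e1
    exact (mul_eq_zero.mp e3).resolve_left hne
  set c := f0 * n0 + f1 * n1 with hc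
  have hf0 : f0 = c * n0 := by rw [hc]; linear_combination -f0 * hn + n1 * hpar
  have hf1 : f1 = c * n1 := by rw [hc]; linear_combination -f1 * hn - n0 * hpar
  clear_value c
  subst hf0 hf1
  have h2 : (b1 - a1) = ((b1 - a1) * n0 - (b0 - a0) * n1) * n0 := by
    linear_combination -(b1 - a1) * hn + n1 * hnt
  have h3 : (b0 - a0) = -((b1 - a1) * n0 - (b0 - a0) * n1) * n1 := by
    linear_combination -(b0 - a0) * hn + n0 * hnt
  have key : ((1 - s) * a0 + s * b0) * (b1 - a1) - ((1 - s) * a1 + s * b1) * (b0 - a0)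
      = a0 * b1 - a1 * b0 := by ring
  set X := (1 - s) * a0 + s * b0
  set Y := (1 - s) * a1 + s * b1
  rw [← key]
  set m := (b1 - a1) * n0 - (b0 - a0) * n1
  have l : b1 = a1 + m * n0 := by linarith
  have l' : b0 = a0 - m * n1 := by linarith
  clear_value X Y m
  subst l l'
  linear_combination m * c ^ 2 * (X * n0 + Y * n1) * hn

lemma pohozaev_alg (X0 X1 d0 d1 u : E2 → ℝ) (z : E2) (X0' X1' d0' d1' u' : E2 →L[ℝ] ℝ) (h : ℝ)
    (hX0 : HasFDerivAt X0 X0' z) (hX1 : HasFDerivAt X1 X1' z) (hd0 : HasFDerivAt d0 d0' z)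
    (hd1 : HasFDerivAt d1 d1' z) (hu : HasFDerivAt u u' z) (d : E2 → ℝ) (X : E2 → ℝ)
    (d' X' : E2 →L[ℝ] ℝ) (hd : HasFDerivAt d d' z) (hX : HasFDerivAt X X' z) (e : E2) :
    fderiv ℝ (fun z => 2 * (X0 z * d0 z + X1 z * d1 z) * d z - (d0 z ^ 2 + d1 z ^ 2) * X z
      + (u z ^ 2 * X z) * (h ^ 2)⁻¹) z e
    = 2 * (X0' e * d0 z + X0 z * d0' e + X1' e * d1 z + X1 z * d1' e) * d z
      + 2 * (X0 z * d0 z + X1 z * d1 z) * d' e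
      - (2 * d0 z * d0' e + 2 * d1 z * d1' e) * X z - (d0 z ^ 2 + d1 z ^ 2) * X' e
      + (2 * u z * u' e * X z + u z ^ 2 * X' e) * (h ^ 2)⁻¹ := by
  have := ((((((hX0.mul hd0).add (hX1.mul hd1)).const_mul 2).mul hd).sub
    (((hd0.pow 2).add (hd1.pow 2)).mul hX)).add (((hu.pow 2).mul hX).mul_const ((h ^ 2)⁻¹))).fderiv
  have h2 := congrArg (fun L : E2 →L[ℝ] ℝ => L e) this
  refine Eq.trans ?_ (h2.trans ?_)
  · rfl
  · simp
    ring

lemma pohozaev (p a b : E2) (hD : det2 a b ≠ 0) (T U : Set E2) (hU : IsOpen U)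
    (hT : T = triMap p a b '' stdTri) (hTU : T ⊆ U) (u : E2 → ℝ)
    (hu : ContDiffOn ℝ (⊤ : ℕ∞) u U) (h : ℝ) (hh : 0 < h)
    (heig : ∀ x ∈ T, -h ^ 2 * (fderiv ℝ (fun y => fderiv ℝ u y (EuclideanSpace.single 0 1)) x
        (EuclideanSpace.single 0 1) + fderiv ℝ (fun y => fderiv ℝ u y (EuclideanSpace.single 1 1)) x
        (EuclideanSpace.single 1 1)) = u x)
    (hb : ∀ t ∈ Set.Icc (0 : ℝ) 1, u (triMap p a b (0, t)) = 0)
    (ha : ∀ t ∈ Set.Icc (0 : ℝ) 1, u (triMap p a b (t, 0)) = 0)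
    (hab : ∀ t ∈ Set.Icc (0 : ℝ) 1, u (triMap p a b (1 - t, t)) = 0)
    (ν : E2) (hν : ν 0 ^ 2 + ν 1 ^ 2 = 1) (hνt : (b 0 - a 0) * ν 0 + (b 1 - a 1) * ν 1 = 0)
    (hnorm : ∫ x in T, (u x) ^ 2 = 1) :
    ∫ t in (0 : ℝ)..1, (h * fderiv ℝ u (triMap p a b (1 - t, t)) ν) ^ 2 = 2 / |det2 a b| := by
  have hsub : ∀ q ∈ stdTri, triMap p a b q ∈ U := fun q hq => hTU (hT ▸ ⟨q, hq, rfl⟩)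
  have hcd : ∀ v, ContDiffOn ℝ 1 (fun z => fderiv ℝ u z v) U := fun v =>
    (hu.fderiv_of_isOpen hU (m := 1) (by norm_cast)).clm_apply contDiffOn_const
  have hu1 : ContDiffOn ℝ 1 u U := hu.of_le (by norm_cast)
  let d0 : E2 → ℝ := fun z => fderiv ℝ u z (EuclideanSpace.single 0 1)
  let d1 : E2 → ℝ := fun z => fderiv ℝ u z (EuclideanSpace.single 1 1)
  let X0 : E2 → ℝ := fun z => z 0 - p 0
  let X1 : E2 → ℝ := fun z => z 1 - p 1
  have cd0 : ContDiffOn ℝ 1 d0 U := hcd _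
  have cd1 : ContDiffOn ℝ 1 d1 U := hcd _
  have hX0 : ∀ z, HasFDerivAt X0 (EuclideanSpace.proj 0 : E2 →L[ℝ] ℝ) z := fun z =>
    (EuclideanSpace.proj 0 : E2 →L[ℝ] ℝ).hasFDerivAt.sub_const (p 0)
  have hX1 : ∀ z, HasFDerivAt X1 (EuclideanSpace.proj 1 : E2 →L[ℝ] ℝ) z := fun z =>
    (EuclideanSpace.proj 1 : E2 →L[ℝ] ℝ).hasFDerivAt.sub_const (p 1)
  have cX0 : ContDiffOn ℝ 1 X0 U :=
    ((EuclideanSpace.proj 0 : E2 →L[ℝ] ℝ).contDiff.sub contDiff_const).contDiffOn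
  have cX1 : ContDiffOn ℝ 1 X1 U :=
    ((EuclideanSpace.proj 1 : E2 →L[ℝ] ℝ).contDiff.sub contDiff_const).contDiffOn
  let V0 : E2 → ℝ := fun z => 2 * (X0 z * d0 z + X1 z * d1 z) * d0 z
    - (d0 z ^ 2 + d1 z ^ 2) * X0 z + (u z ^ 2 * X0 z) * (h ^ 2)⁻¹
  let V1 : E2 → ℝ := fun z => 2 * (X0 z * d0 z + X1 z * d1 z) * d1 z
    - (d0 z ^ 2 + d1 z ^ 2) * X1 z + (u z ^ 2 * X1 z) * (h ^ 2)⁻¹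
  have cV0 : ContDiffOn ℝ 1 V0 U :=
    (((contDiffOn_const.mul ((cX0.mul cd0).add (cX1.mul cd1))).mul cd0).sub
      (((cd0.pow 2).add (cd1.pow 2)).mul cX0)).add (((hu1.pow 2).mul cX0).mul contDiffOn_const)
  have cV1 : ContDiffOn ℝ 1 V1 U :=
    (((contDiffOn_const.mul ((cX0.mul cd0).add (cX1.mul cd1))).mul cd1).sub
      (((cd0.pow 2).add (cd1.pow 2)).mul cX1)).add (((hu1.pow 2).mul cX1).mul contDiffOn_const)
  have hdiv := tri_div p a b U hU hsub V0 V1 cV0 cV1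
  have hudiff : ∀ z ∈ U, DifferentiableAt ℝ u z := fun z hz =>
    (hu1.differentiableOn one_ne_zero).differentiableAt (hU.mem_nhds hz)
  -- the divergence
  have hint : ∀ q ∈ stdTri, fderiv ℝ V0 (triMap p a b q) (EuclideanSpace.single 0 1)
        + fderiv ℝ V1 (triMap p a b q) (EuclideanSpace.single 1 1)
        = 2 * (h ^ 2)⁻¹ * u (triMap p a b q) ^ 2 := by
    intro q hq
    have hz := hsub q hq
    have hzT : triMap p a b q ∈ T := hT ▸ ⟨q, hq, rfl⟩
    have hE := heig _ hzT
    set z := triMap p a b q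
    have hd0 : HasFDerivAt d0 (fderiv ℝ d0 z) z :=
      ((cd0.differentiableOn one_ne_zero).differentiableAt (hU.mem_nhds hz)).hasFDerivAt
    have hd1 : HasFDerivAt d1 (fderiv ℝ d1 z) z :=
      ((cd1.differentiableOn one_ne_zero).differentiableAt (hU.mem_nhds hz)).hasFDerivAt
    have hu0 := (hudiff z hz).hasFDerivAt
    have hsymm : fderiv ℝ d0 z (EuclideanSpace.single 1 1)
        = fderiv ℝ d1 z (EuclideanSpace.single 0 1) := by
      have hs : IsSymmSndFDerivAt ℝ u z :=
        (hu.contDiffAt (hU.mem_nhds hz)).isSymmSndFDerivAt (by simp; norm_cast)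
      have hdd : DifferentiableAt ℝ (fderiv ℝ u) z :=
        ((hu.fderiv_of_isOpen hU (m := 1) (by norm_cast)).differentiableOn
          one_ne_zero).differentiableAt (hU.mem_nhds hz)
      have key : ∀ v w, fderiv ℝ (fun y => fderiv ℝ u y v) z w
          = fderiv ℝ (fderiv ℝ u) z w v := by
        intro v w
        rw [fderiv_clm_apply hdd (differentiableAt_const v)]
        simp
      simp only [d0, d1, key]
      exact hs _ _
    have e1 : fderiv ℝ V0 z (EuclideanSpace.single 0 1) = _ :=
      pohozaev_alg X0 X1 d0 d1 u z _ _ _ _ _ h (hX0 z) (hX1 z) hd0 hd1 hu0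
        d0 X0 _ _ hd0 (hX0 z) (EuclideanSpace.single 0 1)
    have e2 : fderiv ℝ V1 z (EuclideanSpace.single 1 1) = _ :=
      pohozaev_alg X0 X1 d0 d1 u z _ _ _ _ _ h (hX0 z) (hX1 z) hd0 hd1 hu0
        d1 X1 _ _ hd1 (hX1 z) (EuclideanSpace.single 1 1)
    rw [e1, e2]
    have p00 : (EuclideanSpace.proj 0 : E2 →L[ℝ] ℝ) (EuclideanSpace.single 0 1) = 1 := by simp
    have p01 : (EuclideanSpace.proj 0 : E2 →L[ℝ] ℝ) (EuclideanSpace.single 1 1) = 0 := by simp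
    have p10 : (EuclideanSpace.proj 1 : E2 →L[ℝ] ℝ) (EuclideanSpace.single 0 1) = 0 := by simp
    have p11 : (EuclideanSpace.proj 1 : E2 →L[ℝ] ℝ) (EuclideanSpace.single 1 1) = 1 := by simp
    rw [p00, p01, p10, p11, hsymm]
    change -h ^ 2 * (fderiv ℝ d0 z _ + fderiv ℝ d1 z _) = u z at hE
    have hE' : fderiv ℝ d0 z (EuclideanSpace.single 0 1) + fderiv ℝ d1 z (EuclideanSpace.single 1 1)
        = -(h ^ 2)⁻¹ * u z := by
      rw [← hE]; field_simp
    change _ + (2 * _ * _ + 2 * _ * _ - _ - _ + (2 * u z * d1 z * X1 z + _) * _) = _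
    change (2 * _ * _ + 2 * _ * _ - _ - _ + (2 * u z * d0 z * X0 z + _) * _) + _ = _
    linear_combination (2 * (X0 z * d0 z + X1 z * d1 z)) * hE'
  rw [setIntegral_congr_fun stdTri_closed.measurableSet hint, integral_const_mul] at hdiv
  rw [hT, triMap_integral p a b hD] at hnorm
  have hDpos : 0 < |det2 a b| := abs_pos.mpr hD
  have hI : ∫ q in stdTri, u (triMap p a b q) ^ 2 = 1 / |det2 a b| := by
    field_simp; linarith
  rw [hI] at hdiv
  -- the boundary
  have t0 : ∀ t : ℝ, triMap p a b (0, t) = p + t • b := fun t => by simp [triMap]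
  have t1 : ∀ t : ℝ, triMap p a b (t, 0) = p + t • a := fun t => by simp [triMap]
  have t2 : ∀ t : ℝ, triMap p a b (1 - t, t) = (p + a) + t • (b - a) := fun t => by
    simp only [triMap]; module
  have mem0 : ∀ t ∈ Set.Icc (0 : ℝ) 1, ((0 : ℝ), t) ∈ stdTri := fun t ht =>
    ⟨le_rfl, ht.1, by simpa using ht.2⟩
  have mem1 : ∀ t ∈ Set.Icc (0 : ℝ) 1, (t, (0 : ℝ)) ∈ stdTri := fun t ht =>
    ⟨ht.1, le_rfl, by simpa using ht.2⟩
  have mem2 : ∀ t ∈ Set.Icc (0 : ℝ) 1, (1 - t, t) ∈ stdTri := fun t ht =>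
    ⟨by simpa using ht.2, ht.1, by simp⟩
  have B0 : ∀ t ∈ Set.Icc (0 : ℝ) 1,
      b 1 * V0 (triMap p a b (0, t)) - b 0 * V1 (triMap p a b (0, t)) = 0 := by
    intro t ht
    have hz := hudiff _ (hsub _ (mem0 t ht))
    have hv := hb t ht
    rw [t0] at hz hv ⊢
    have := deriv_along u p b t ht hz (fun s hs => by rw [← t0]; exact hb s hs)
    rw [clm_decomp] at this
    have x0 : X0 (p + t • b) = t * b 0 := by simp [X0]
    have x1 : X1 (p + t • b) = t * b 1 := by simp [X1]
    change b 0 * d0 (p + t • b) + b 1 * d1 (p + t • b) = 0 at this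
    simp only [V0, V1, x0, x1, hv]
    linear_combination (2 * t * (d0 (p + t • b) * b 1 - d1 (p + t • b) * b 0)) * this
  have B1 : ∀ t ∈ Set.Icc (0 : ℝ) 1,
      a 0 * V1 (triMap p a b (t, 0)) - a 1 * V0 (triMap p a b (t, 0)) = 0 := by
    intro t ht
    have hz := hudiff _ (hsub _ (mem1 t ht))
    have hv := ha t ht
    rw [t1] at hz hv ⊢
    have := deriv_along u p a t ht hz (fun s hs => by rw [← t1]; exact ha s hs)
    rw [clm_decomp] at this
    have x0 : X0 (p + t • a) = t * a 0 := by simp [X0]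
    have x1 : X1 (p + t • a) = t * a 1 := by simp [X1]
    change a 0 * d0 (p + t • a) + a 1 * d1 (p + t • a) = 0 at this
    simp only [V0, V1, x0, x1, hv]
    linear_combination (2 * t * (d1 (p + t • a) * a 0 - d0 (p + t • a) * a 1)) * this
  have B2 : ∀ t ∈ Set.Icc (0 : ℝ) 1,
      (b 1 * V0 (triMap p a b (1 - t, t)) - b 0 * V1 (triMap p a b (1 - t, t)))
      + (a 0 * V1 (triMap p a b (1 - t, t)) - a 1 * V0 (triMap p a b (1 - t, t)))
      = det2 a b * (fderiv ℝ u (triMap p a b (1 - t, t)) ν) ^ 2 := by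
    intro t ht
    have hz := hudiff _ (hsub _ (mem2 t ht))
    have hv := hab t ht
    have hz' := hz
    rw [t2] at hz'
    have := deriv_along u (p + a) (b - a) t ht hz' (fun s hs => by rw [← t2]; exact hab s hs)
    rw [← t2, clm_decomp] at this
    rw [clm_decomp _ ν]
    have x0 : X0 (triMap p a b (1 - t, t)) = (1 - t) * a 0 + t * b 0 := by simp [X0, triMap]; ring
    have x1 : X1 (triMap p a b (1 - t, t)) = (1 - t) * a 1 + t * b 1 := by simp [X1, triMap]; ring
    change (b 0 - a 0) * d0 (triMap p a b (1 - t, t))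
      + (b 1 - a 1) * d1 (triMap p a b (1 - t, t)) = 0 at this
    simp only [V0, V1, x0, x1, hv]
    change _ = _ * (ν 0 * d0 (triMap p a b (1 - t, t)) + ν 1 * d1 (triMap p a b (1 - t, t))) ^ 2
    have := boundary_alg (a 0) (a 1) (b 0) (b 1) (ν 0) (ν 1) (d0 (triMap p a b (1 - t, t)))
      (d1 (triMap p a b (1 - t, t))) t hν hνt this hD
    unfold det2
    linear_combination this
  have hu01 : Set.uIcc (0 : ℝ) 1 = Set.Icc 0 1 := Set.uIcc_of_le zero_le_one
  have J1 : ∫ t in (0 : ℝ)..1, ((b 1 * V0 (triMap p a b (1 - t, t))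
        - b 0 * V1 (triMap p a b (1 - t, t)))
        - (b 1 * V0 (triMap p a b (0, t)) - b 0 * V1 (triMap p a b (0, t))))
      = ∫ t in (0 : ℝ)..1, (b 1 * V0 (triMap p a b (1 - t, t))
        - b 0 * V1 (triMap p a b (1 - t, t))) := by
    refine intervalIntegral.integral_congr fun t ht => ?_
    rw [hu01] at ht
    simp only [B0 t ht, sub_zero]
  have J2 : ∫ t in (0 : ℝ)..1, ((a 0 * V1 (triMap p a b (t, 1 - t))
        - a 1 * V0 (triMap p a b (t, 1 - t)))
        - (a 0 * V1 (triMap p a b (t, 0)) - a 1 * V0 (triMap p a b (t, 0))))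
      = ∫ t in (0 : ℝ)..1, (a 0 * V1 (triMap p a b (1 - t, t))
        - a 1 * V0 (triMap p a b (1 - t, t))) := by
    have := intervalIntegral.integral_comp_sub_left (a := 0) (b := 1)
      (fun t => a 0 * V1 (triMap p a b (t, 1 - t)) - a 1 * V0 (triMap p a b (t, 1 - t))) (1 : ℝ)
    simp only [sub_self, sub_zero, sub_sub_cancel] at this
    rw [this]
    refine intervalIntegral.integral_congr fun t ht => ?_
    rw [hu01] at ht
    simp only [B1 t ht, sub_zero]
  have cc : ∀ V : E2 → ℝ, ContDiffOn ℝ 1 V U →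
      ContinuousOn (fun t : ℝ => V (triMap p a b (1 - t, t))) (Set.uIcc 0 1) := by
    intro V hV
    rw [hu01]
    exact hV.continuousOn.comp ((triMap_cont p a b).comp (by fun_prop)).continuousOn
      (fun t ht => hsub _ (mem2 t ht))
  rw [J1, J2, ← intervalIntegral.integral_add, 
    intervalIntegral.integral_congr (fun t ht => B2 t (hu01 ▸ ht)),
    intervalIntegral.integral_const_mul] at hdiv
  · have := mul_left_cancel₀ hD hdiv
    simp only [mul_pow]
    rw [intervalIntegral.integral_const_mul, ← this]
    field_simp
  · exact ((continuousOn_const.mul (cc V0 cV0)).sub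
      (continuousOn_const.mul (cc V1 cV1))).intervalIntegrable
  · exact ((continuousOn_const.mul (cc V1 cV1)).sub
      (continuousOn_const.mul (cc V0 cV0))).intervalIntegrable

lemma inner2 (x y : E2) : ⟪x, y⟫ = x 0 * y 0 + x 1 * y 1 := by
  rw [PiLp.inner_apply, Fin.sum_univ_two]
  simp [mul_comm]

lemma norm2_sq (x : E2) : ‖x‖ ^ 2 = x 0 ^ 2 + x 1 ^ 2 := by
  rw [EuclideanSpace.norm_sq_eq, Fin.sum_univ_two]
  simp

lemma fin3_univ (i j k : Fin 3) (hij : i ≠ j) (hki : k ≠ i) (hkj : k ≠ j) (m : Fin 3) :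
    m = i ∨ m = j ∨ m = k := by
  revert i j k m; decide

lemma hull_eq (P : Fin 3 → E2) (i j k : Fin 3) (hij : i ≠ j) (hki : k ≠ i) (hkj : k ≠ j) :
    convexHull ℝ (Set.range P) = triMap (P k) (P i - P k) (P j - P k) '' stdTri := by
  apply Set.Subset.antisymm
  · apply convexHull_min
    · rintro _ ⟨m, rfl⟩
      rcases fin3_univ i j k hij hki hkj m with rfl | rfl | rfl
      · exact ⟨(1, 0), by norm_num [stdTri], by simp [triMap]⟩
      · exact ⟨(0, 1), by norm_num [stdTri], by simp [triMap]⟩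
      · exact ⟨(0, 0), by norm_num [stdTri], by simp [triMap]⟩
    · rintro _ ⟨⟨x, y⟩, ⟨h1, h2, h3⟩, rfl⟩ _ ⟨⟨x', y'⟩, ⟨h1', h2', h3'⟩, rfl⟩ s t hs ht hst
      simp only at h1 h2 h3 h1' h2' h3'
      refine ⟨(s * x + t * x', s * y + t * y'), ⟨by positivity, by positivity, ?_⟩, ?_⟩
      · simp only
        nlinarith
      · have : s = 1 - t := by linarith
        subst this
        simp only [triMap]
        module
  · rintro _ ⟨⟨x, y⟩, ⟨h1, h2, h3⟩, rfl⟩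
    simp only at h1 h2 h3
    have hm : ∀ m, P m ∈ convexHull ℝ (Set.range P) := fun m =>
      subset_convexHull ℝ _ ⟨m, rfl⟩
    have := (convex_convexHull ℝ (Set.range P)).sum_mem (t := Finset.univ)
      (w := ![1 - x - y, x, y]) (z := ![P k, P i, P j])
      (by intro l _; fin_cases l <;> simp <;> linarith)
      (by simp [Fin.sum_univ_three]; ring)
      (by intro l _; fin_cases l <;> simp [hm])
    simp only [Fin.sum_univ_three] at this
    convert this using 1
    simp [triMap]
    module

lemma mem_frontier_of_normal (P : Fin 3 → E2) (z ν : E2) (i : Fin 3)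
    (hz : z ∈ convexHull ℝ (Set.range P)) (hν : ‖ν‖ = 1)
    (hP : ∀ m, ⟪P m - P i, ν⟫ ≤ 0) (hz0 : ⟪z - P i, ν⟫ = 0) :
    z ∈ frontier (convexHull ℝ (Set.range P)) := by
  have hle : ∀ w ∈ convexHull ℝ (Set.range P), ⟪w - P i, ν⟫ ≤ 0 := by
    intro w hw
    have hcv : Convex ℝ {w : E2 | ⟪w - P i, ν⟫ ≤ 0} := by
      intro x hx y hy s t hs ht hst
      simp only [Set.mem_ofPred_eq] at *
      have : s • x + t • y - P i = s • (x - P i) + t • (y - P i) := by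
        have : s = 1 - t := by linarith
        subst this; module
      rw [this, inner_add_left, real_inner_smul_left, real_inner_smul_left]
      nlinarith
    exact convexHull_min (by rintro _ ⟨m, rfl⟩; exact hP m) hcv hw
  refine ⟨subset_closure hz, fun hint => ?_⟩
  have hn := mem_interior_iff_mem_nhds.mp hint
  have hc : Filter.Tendsto (fun s : ℝ => z + s • ν) (nhdsWithin 0 (Set.Ioi 0)) (nhds z) := by
    have : Continuous (fun s : ℝ => z + s • ν) := by fun_prop
    have := (this.tendsto 0).mono_left (nhdsWithin_le_nhds (s := Set.Ioi (0 : ℝ)))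
    simpa using this
  obtain ⟨s, hs, hs0⟩ := ((hc.eventually hn).and self_mem_nhdsWithin).exists
  have h1 := hle _ hs
  have : z + s • ν - P i = (z - P i) + s • ν := by module
  rw [this, inner_add_left, real_inner_smul_left, hz0, real_inner_self_eq_norm_sq, hν] at h1
  have : (0 : ℝ) < s := hs0
  linarith

lemma side_frontier (P : Fin 3 → E2) (ν : Fin 3 → Fin 3 → E2)
    (hunit : ∀ i j, i ≠ j → ‖ν i j‖ = 1)
    (htan : ∀ i j, i ≠ j → ⟪P i - P j, ν i j⟫ = 0)
    (hout : ∀ i j k, i ≠ j → k ≠ i → k ≠ j → ⟪P k - P i, ν i j⟫ < 0)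
    (i j : Fin 3) (hij : i ≠ j) (t : ℝ) (ht : t ∈ Set.Icc (0 : ℝ) 1) :
    P i + t • (P j - P i) ∈ frontier (convexHull ℝ (Set.range P)) := by
  have htan' : ⟪P j - P i, ν i j⟫ = 0 := by
    rw [← neg_sub, inner_neg_left, htan i j hij, neg_zero]
  refine mem_frontier_of_normal P _ (ν i j) i ?_ (hunit i j hij) ?_ ?_
  · have := (convex_convexHull ℝ (Set.range P)).add_smul_sub_mem
      (subset_convexHull ℝ _ ⟨i, rfl⟩) (subset_convexHull ℝ _ ⟨j, rfl⟩) ht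
    exact this
  · intro m
    by_cases h1 : m = i
    · simp [h1]
    by_cases h2 : m = j
    · rw [h2, htan']
    exact (hout i j m hij h1 h2).le
  · rw [add_sub_cancel_left, real_inner_smul_left, htan', mul_zero]

lemma det_ne (a b ν : E2) (hab : a ≠ b) (ht : ⟪a - b, ν⟫ = 0) (ho : ⟪-a, ν⟫ < 0) :
    det2 a b ≠ 0 := by
  intro hD
  rw [inner2] at ht ho
  simp only [PiLp.sub_apply, PiLp.neg_apply] at ht ho
  unfold det2 at hD
  have hne : a 0 * ν 0 + a 1 * ν 1 ≠ 0 := by intro h; linarith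
  have e0 : (a 0 * ν 0 + a 1 * ν 1) * (a 0 - b 0) = 0 := by
    linear_combination a 0 * ht + ν 1 * hD
  have e1 : (a 0 * ν 0 + a 1 * ν 1) * (a 1 - b 1) = 0 := by
    linear_combination a 1 * ht - ν 0 * hD
  apply hab
  ext l
  fin_cases l
  · exact sub_eq_zero.mp ((mul_eq_zero.mp e0).resolve_left hne)
  · exact sub_eq_zero.mp ((mul_eq_zero.mp e1).resolve_left hne)

/-- Equidistribution of the Neumann data mass on a triangle. -/
lemma side_mass (P : Fin 3 → E2) (hP : AffineIndependent ℝ P)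
    (T : Set E2) (hT : T = convexHull ℝ (Set.range P)) (ν : Fin 3 → Fin 3 → E2)
    (hunit : ∀ i j, i ≠ j → ‖ν i j‖ = 1)
    (htan : ∀ i j, i ≠ j → ⟪P i - P j, ν i j⟫ = 0)
    (hout : ∀ i j k, i ≠ j → k ≠ i → k ≠ j → ⟪P k - P i, ν i j⟫ < 0)
    (h : ℝ) (hh : 0 < h) (u : E2 → ℝ) (U : Set E2) (hU : IsOpen U) (hTU : T ⊆ U)
    (hsmooth : ContDiffOn ℝ (⊤ : ℕ∞) u U)
    (heig : ∀ x ∈ T, -h ^ 2 * lap u x = u x)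
    (hdir : ∀ x ∈ frontier T, u x = 0) (hnorm : ∫ x in T, (u x) ^ 2 = 1)
    (i j k : Fin 3) (hij : i ≠ j) (hki : k ≠ i) (hkj : k ≠ j) :
    det2 (P i - P k) (P j - P k) ≠ 0 ∧
    ∫ x in segment ℝ (P i) (P j), (h * ⟪gradient u x, ν i j⟫) ^ 2 ∂(μH[(1 : ℝ)]) =
      dist (P i) (P j) * (2 / |det2 (P i - P k) (P j - P k)|) := by
  have hne : P i ≠ P j := fun he => hij (hP.injective he)
  have hD : det2 (P i - P k) (P j - P k) ≠ 0 := by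
    refine det_ne _ _ (ν i j) (fun he => hne (sub_left_injective he)) ?_ ?_
    · rw [sub_sub_sub_cancel_right]; exact htan i j hij
    · rw [neg_sub]; exact hout i j k hij hki hkj
  refine ⟨hD, ?_⟩
  have hfr := side_frontier P ν hunit htan hout
  rw [← hT] at hfr
  rw [segment_integral _ _ hne]
  congr 1
  have t2 : ∀ t : ℝ, triMap (P k) (P i - P k) (P j - P k) (1 - t, t) = P i + t • (P j - P i) :=
    fun t => by simp only [triMap]; module
  have := pohozaev (P k) (P i - P k) (P j - P k) hD T U hU
    (hT.trans (hull_eq P i j k hij hki hkj)) hTU u hsmooth h hh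
    (fun x hx => by have := heig x hx; simpa only [lap, Fin.sum_univ_two] using this)
    (fun t ht => by
      have := hdir _ (hfr k j hkj t ht)
      simpa [triMap] using this)
    (fun t ht => by
      have := hdir _ (hfr k i hki t ht)
      simpa [triMap] using this)
    (fun t ht => by
      rw [t2]
      exact hdir _ (hfr i j hij t ht))
    (ν i j) (by rw [← norm2_sq, hunit i j hij]; norm_num)
    (by
      have := htan i j hij
      rw [inner2] at this
      simp only [PiLp.sub_apply] at this ⊢
      linear_combination -this)
    hnorm
  rw [← this]
  refine intervalIntegral.integral_congr fun t _ => ?_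
  simp only [t2, inner_gradient_left]

lemma heron (a b : E2) :
    4 * det2 a b ^ 2 = 4 * ‖a‖ ^ 2 * ‖b‖ ^ 2 - (‖a‖ ^ 2 + ‖b‖ ^ 2 - ‖a - b‖ ^ 2) ^ 2 := by
  simp only [norm2_sq, det2, PiLp.sub_apply]
  ring

lemma exists_isometry (P Q : Fin 3 → E2) (hP : AffineIndependent ℝ P)
    (hd : ∀ i j, dist (P i) (P j) = dist (Q i) (Q j)) :
    ∃ φ : E2 ≃ᵢ E2, φ '' convexHull ℝ (Set.range P) = convexHull ℝ (Set.range Q) := by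
  have hli := (affineIndependent_iff_linearIndependent_vsub ℝ P 0).mp hP
  have hcard : Fintype.card {x : Fin 3 // x ≠ 0} = Module.finrank ℝ E2 := by
    simp
  have : Nonempty {x : Fin 3 // x ≠ 0} := ⟨⟨1, by decide⟩⟩
  let B := basisOfLinearIndependentOfCardEqFinrank hli hcard
  have hB : ∀ m, B m = P m - P 0 := fun m => by simp [B]
  let L : E2 →ₗ[ℝ] E2 := B.constr ℝ (fun m => Q m - Q 0)
  have hL : ∀ m : Fin 3, L (P m - P 0) = Q m - Q 0 := by
    intro m
    by_cases h0 : m = 0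
    · simp [h0]
    · have := B.constr_basis ℝ (fun m => Q m - Q 0) ⟨m, h0⟩
      rw [hB] at this
      exact this
  have hinn : ∀ m n : Fin 3, ⟪Q m - Q 0, Q n - Q 0⟫ = ⟪P m - P 0, P n - P 0⟫ := by
    intro m n
    have e1 : ∀ x y : E2, ⟪x, y⟫ = (‖x‖ ^ 2 + ‖y‖ ^ 2 - ‖x - y‖ ^ 2) / 2 := fun x y => by
      rw [norm_sub_sq_real]; ring
    rw [e1, e1, sub_sub_sub_cancel_right, sub_sub_sub_cancel_right]
    simp only [← dist_eq_norm, hd]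
  have hLi : ∀ x y, ⟪L x, L y⟫ = ⟪x, y⟫ := by
    intro x y
    rw [← B.sum_repr x, ← B.sum_repr y]
    simp only [map_sum, map_smul, sum_inner, inner_sum, real_inner_smul_left,
      real_inner_smul_right, hB, hL, hinn]
  let Li : E2 →ₗᵢ[ℝ] E2 := L.isometryOfInner hLi
  let Le : E2 ≃ₗᵢ[ℝ] E2 := Li.toLinearIsometryEquiv rfl
  have hLe : ∀ x, Le x = L x := fun x => rfl
  let A : E2 →ᵃ[ℝ] E2 := (L.toAffineMap).comp (AffineMap.id ℝ E2 - AffineMap.const ℝ E2 (P 0))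
    + AffineMap.const ℝ E2 (Q 0)
  let φ : E2 ≃ᵢ E2 := ((IsometryEquiv.subRight (P 0)).trans Le.toIsometryEquiv).trans
    (IsometryEquiv.addRight (Q 0))
  have hφA : ∀ x, φ x = A x := fun x => rfl
  refine ⟨φ, ?_⟩
  have : (φ : E2 → E2) = A := funext hφA
  rw [this, A.image_convexHull, ← Set.range_comp]
  congr 2
  ext1 m
  change L (P m - P 0) + Q 0 = Q m
  rw [hL]; abel

/-- **The norms of the Neumann data determine the triangle.**
Let `T = conv{P₀,P₁,P₂}` and `T' = conv{Q₀,Q₁,Q₂}` be two nondegenerate triangles in `ℝ²`,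
with `νP i j` (resp. `νQ i j`) the outward unit normal to the side `[Pᵢ, Pⱼ]`
(resp. `[Qᵢ, Qⱼ]`), and let `u`, `u'` be normalized Dirichlet eigenfunctions on `T`, `T'`.
If for each side `∫_{[Pᵢ,Pⱼ]} |h ∂_ν u|² dS = ∫_{[Qᵢ,Qⱼ]} |h' ∂_ν u'|² dS`, then
corresponding side lengths agree, i.e. the triangles are congruent: `T'` is the image of
`T` under an isometry of `ℝ²`. -/
theorem neumann_mass_determines_triangle
    (P Q : Fin 3 → EuclideanSpace ℝ (Fin 2))
    (hP : AffineIndependent ℝ P) (hQ : AffineIndependent ℝ Q)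
    (T T' : Set (EuclideanSpace ℝ (Fin 2)))
    (hT : T = convexHull ℝ (Set.range P)) (hT' : T' = convexHull ℝ (Set.range Q))
    (νP νQ : Fin 3 → Fin 3 → EuclideanSpace ℝ (Fin 2))
    (hνP_unit : ∀ i j, i ≠ j → ‖νP i j‖ = 1)
    (hνP_tangent : ∀ i j, i ≠ j → ⟪P i - P j, νP i j⟫ = 0)
    (hνP_outward : ∀ i j k, i ≠ j → k ≠ i → k ≠ j → ⟪P k - P i, νP i j⟫ < 0)
    (hνQ_unit : ∀ i j, i ≠ j → ‖νQ i j‖ = 1)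
    (hνQ_tangent : ∀ i j, i ≠ j → ⟪Q i - Q j, νQ i j⟫ = 0)
    (hνQ_outward : ∀ i j k, i ≠ j → k ≠ i → k ≠ j → ⟪Q k - Q i, νQ i j⟫ < 0)
    (h h' : ℝ) (hh : 0 < h) (hh' : 0 < h')
    (u u' : EuclideanSpace ℝ (Fin 2) → ℝ)
    (U U' : Set (EuclideanSpace ℝ (Fin 2)))
    (hU : IsOpen U) (hTU : T ⊆ U) (hU' : IsOpen U') (hTU' : T' ⊆ U')
    (hsmooth : ContDiffOn ℝ (⊤ : ℕ∞) u U) (hsmooth' : ContDiffOn ℝ (⊤ : ℕ∞) u' U')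
    (heig : ∀ x ∈ T, -h ^ 2 * lap u x = u x)
    (heig' : ∀ x ∈ T', -h' ^ 2 * lap u' x = u' x)
    (hdirichlet : ∀ x ∈ frontier T, u x = 0)
    (hdirichlet' : ∀ x ∈ frontier T', u' x = 0)
    (hnorm : ∫ x in T, (u x) ^ 2 = 1) (hnorm' : ∫ x in T', (u' x) ^ 2 = 1)
    (hdata : ∀ i j, i ≠ j →
      ∫ x in segment ℝ (P i) (P j), (h * ⟪gradient u x, νP i j⟫) ^ 2 ∂(μH[(1 : ℝ)]) =
      ∫ x in segment ℝ (Q i) (Q j), (h' * ⟪gradient u' x, νQ i j⟫) ^ 2 ∂(μH[(1 : ℝ)])) :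
    (∀ i j, dist (P i) (P j) = dist (Q i) (Q j)) ∧
      ∃ φ : EuclideanSpace ℝ (Fin 2) ≃ᵢ EuclideanSpace ℝ (Fin 2), φ '' T = T' := by
  have mP := side_mass P hP T hT νP hνP_unit hνP_tangent hνP_outward h hh u U hU hTU hsmooth heig
    hdirichlet hnorm
  have mQ := side_mass Q hQ T' hT' νQ hνQ_unit hνQ_tangent hνQ_outward h' hh' u' U' hU' hTU'
    hsmooth' heig' hdirichlet' hnorm'
  have cyc : ∀ a b c : E2, |det2 (b - a) (c - a)| = |det2 (a - c) (b - c)| := by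
    intro a b c
    congr 1
    simp only [det2, PiLp.sub_apply]; ring
  have cyc2 : ∀ a b c : E2, |det2 (a - b) (c - b)| = |det2 (a - c) (b - c)| := by
    intro a b c
    rw [← abs_neg]; congr 1
    simp only [det2, PiLp.sub_apply]; ring
  set p := |det2 (P 0 - P 2) (P 1 - P 2)| with hp
  set q := |det2 (Q 0 - Q 2) (Q 1 - Q 2)| with hq
  have hp0 : 0 < p := abs_pos.mpr (mP 0 1 2 (by decide) (by decide) (by decide)).1
  have hq0 : 0 < q := abs_pos.mpr (mQ 0 1 2 (by decide) (by decide) (by decide)).1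
  have d01 : q * dist (P 0) (P 1) = p * dist (Q 0) (Q 1) := by
    have e := hdata 0 1 (by decide)
    rw [(mP 0 1 2 (by decide) (by decide) (by decide)).2,
      (mQ 0 1 2 (by decide) (by decide) (by decide)).2, ← hp, ← hq] at e
    field_simp at e
    linarith
  have d12 : q * dist (P 1) (P 2) = p * dist (Q 1) (Q 2) := by
    have e := hdata 1 2 (by decide)
    rw [(mP 1 2 0 (by decide) (by decide) (by decide)).2,
      (mQ 1 2 0 (by decide) (by decide) (by decide)).2, cyc (P 0), cyc (Q 0), ← hp, ← hq] at e
    field_simp at e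
    linarith
  have d02 : q * dist (P 0) (P 2) = p * dist (Q 0) (Q 2) := by
    have e := hdata 0 2 (by decide)
    rw [(mP 0 2 1 (by decide) (by decide) (by decide)).2,
      (mQ 0 2 1 (by decide) (by decide) (by decide)).2, cyc2 (P 0), cyc2 (Q 0), ← hp, ← hq] at e
    field_simp at e
    linarith
  have hPh := heron (P 0 - P 2) (P 1 - P 2)
  have hQh := heron (Q 0 - Q 2) (Q 1 - Q 2)
  rw [sub_sub_sub_cancel_right, ← dist_eq_norm, ← dist_eq_norm, ← dist_eq_norm, ← sq_abs,
    ← hp] at hPh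
  rw [sub_sub_sub_cancel_right, ← dist_eq_norm, ← dist_eq_norm, ← dist_eq_norm, ← sq_abs,
    ← hq] at hQh
  have hpq : p = q := by
    have e1 : dist (Q 0) (Q 1) = q / p * dist (P 0) (P 1) := by field_simp; linarith
    have e2 : dist (Q 1) (Q 2) = q / p * dist (P 1) (P 2) := by field_simp; linarith
    have e3 : dist (Q 0) (Q 2) = q / p * dist (P 0) (P 2) := by field_simp; linarith
    have e4 : 4 * q ^ 2 = (q / p) ^ 4 * (4 * p ^ 2) := by
      rw [hQh, hPh, e1, e2, e3]; ring
    have e5 : p ^ 2 = q ^ 2 := by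
      field_simp at e4
      linarith
    exact (pow_left_inj₀ hp0.le hq0.le two_ne_zero).mp e5
  rw [← hpq] at d01 d12 d02
  have f01 := mul_left_cancel₀ hp0.ne' d01
  have f12 := mul_left_cancel₀ hp0.ne' d12
  have f02 := mul_left_cancel₀ hp0.ne' d02
  have hd : ∀ i j, dist (P i) (P j) = dist (Q i) (Q j) := by
    intro i j
    fin_cases i <;> fin_cases j <;>
      simp only [Fin.zero_eta, Fin.mk_one, Fin.reduceFinMk, dist_self]
    · exact f01
    · exact f02
    · rw [dist_comm, f01, dist_comm]
    · exact f12
    · rw [dist_comm, f02, dist_comm]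
    · rw [dist_comm, f12, dist_comm]
  refine ⟨hd, ?_⟩
  rw [hT, hT']
  exact exists_isometry P Q hP hd
end

section
/- There exists an invertible 3×3 real matrix B such that |Bᵀe₁|² = |Bᵀe₂|² = |Bᵀe₃|² = 1 and |Bᵀ(1,1,1)ᵀ|² = 3, but B Bᵀ ≠ I. (Consequently, in dimension 3 the quantities νᵀ(BBᵀ)ν for the four outward unit normals ν of the standard simplex do not determine the matrix Γ = BBᵀ, so the norms of the Neumann data of eigenfunctions of the associated constant-coefficient elliptic operator do not determine the operator.) -/
/-- **Non-uniqueness in dimension 3.**  There is an invertible `3×3` real matrix `B` with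
`|Bᵀe₁|² = |Bᵀe₂|² = |Bᵀe₃|² = 1` and `|Bᵀ(1,1,1)ᵀ|² = 3`, yet `BBᵀ ≠ I`: the quadratic
form values `νᵀ(BBᵀ)ν` at the four outward unit normals of the standard simplex do not
determine `Γ = BBᵀ`. -/
theorem exists_matrix_neumann_data_not_determining :
    ∃ B : Matrix (Fin 3) (Fin 3) ℝ, IsUnit B.det ∧
      (∀ i, ∑ k, (B.transpose.mulVec (Pi.single i 1)) k ^ 2 = 1) ∧
      (∑ k, (B.transpose.mulVec (fun _ => 1)) k ^ 2 = 3) ∧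
      B * B.transpose ≠ 1 := by
  have h7 : (√7 : ℝ) ^ 2 = 7 := Real.sq_sqrt (by norm_num)
  have hpos : (0 : ℝ) < √7 := Real.sqrt_pos.mpr (by norm_num)
  refine ⟨!![1, 0, 0; 3/5, 4/5, 0; 0, -3/4, √7/4], ?_, ?_, ?_, ?_⟩
  · rw [isUnit_iff_ne_zero, Matrix.det_fin_three]
    simp
  · intro i
    fin_cases i <;> simp [Fin.sum_univ_three, div_pow] <;> norm_num
  · simp [Matrix.mulVec, dotProduct, Fin.sum_univ_three, div_pow]
    norm_num
  · intro h
    have h01 := congrFun (congrFun h 0) 1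
    simp [Matrix.mul_apply, Fin.sum_univ_three] at h01
end

section
/- Let 0 < ε < 1, set d = (−3ε(1 − ε²)^{1/2} − ε²)/((1 − ε²)^{1/2} + ε), and suppose d² + ε² ≤ 1; set a = (1 − d² − ε²)^{1/2}. Define the 3×3 matrix B by Bᵀ = [[a, 0, 0], [d, (1 − ε²)^{1/2}, ε], [ε, ε, (1 − ε²)^{1/2}]]. Then |Bᵀe₁|² = 1, |Bᵀe₂|² = 1, |Bᵀe₃|² = 1, and |Bᵀ(1,1,1)ᵀ|² = 3. -/
/-- **The explicit 3-dimensional example.**  For `0 < ε < 1`, with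
`d = (−3ε√(1−ε²) − ε²)/(√(1−ε²) + ε)` (assuming `d² + ε² ≤ 1`) and
`a = √(1 − d² − ε²)`, the matrix `B` with
`Bᵀ = [[a,0,0],[d,√(1−ε²),ε],[ε,ε,√(1−ε²)]]` satisfies
`|Bᵀe₁|² = |Bᵀe₂|² = |Bᵀe₃|² = 1` and `|Bᵀ(1,1,1)ᵀ|² = 3`. -/
theorem explicit_example_dim3
    (ε : ℝ) (hε0 : 0 < ε) (hε1 : ε < 1)
    (d : ℝ)
    (hd : d = (-3 * ε * Real.sqrt (1 - ε ^ 2) - ε ^ 2) / (Real.sqrt (1 - ε ^ 2) + ε))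
    (hde : d ^ 2 + ε ^ 2 ≤ 1)
    (a : ℝ) (ha : a = Real.sqrt (1 - d ^ 2 - ε ^ 2))
    (B : Matrix (Fin 3) (Fin 3) ℝ)
    (hB : B.transpose = !![a, 0, 0;
                           d, Real.sqrt (1 - ε ^ 2), ε;
                           ε, ε, Real.sqrt (1 - ε ^ 2)]) :
    (∀ i, ∑ k, (B.transpose.mulVec (Pi.single i 1)) k ^ 2 = 1) ∧
      ∑ k, (B.transpose.mulVec (fun _ => 1)) k ^ 2 = 3 := by
  have hs2 : Real.sqrt (1 - ε ^ 2) ^ 2 = 1 - ε ^ 2 := Real.sq_sqrt (by nlinarith)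
  have hs0 : 0 ≤ Real.sqrt (1 - ε ^ 2) := Real.sqrt_nonneg _
  have ha2 : a ^ 2 = 1 - d ^ 2 - ε ^ 2 := by
    rw [ha]; exact Real.sq_sqrt (by linarith)
  rw [hB]
  generalize Real.sqrt (1 - ε ^ 2) = s at *
  have hd2 : d * (s + ε) = -3 * ε * s - ε ^ 2 := by
    rw [hd]; exact div_mul_cancel₀ _ (by positivity)
  clear hd ha
  constructor
  · intro i
    fin_cases i <;> simp [Fin.sum_univ_three] <;> linarith
  · simp [Fin.sum_univ_three, Matrix.mulVec, dotProduct]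
    linear_combination ha2 + 2 * hs2 + 2 * hd2
end
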